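/- Two-scale compactness for gradients: let E be a sequence of positive reals tending to 0 and suppose (u_ε)_{ε∈E} is bounded in L²(0,T;H¹(Q)). Then there is a subsequence E′ of E such that, as E′ ∋ ε → 0: u_ε → u₀ in L²(Q_T)-weak two-scale; u_ε → ũ₀ in L²(0,T;H¹(Q))-weak; and ∂u_ε/∂x_j → ∂u₀/∂x_j + ∂u₁/∂y_j in L²(Q_T)-weak two-scale for 1 ≤ j ≤ N, where u₀ ∈ L²(0,T;L²(𝒯;H¹(Q))) with ũ₀ = ∫_𝒯 u₀ dτ and u₁ ∈ L²(Q_T;L²(𝒯;H¹_#(𝒴))). If moreover (∂u_ε/∂t)_{ε∈E} is bounded in L²(0,T;(H¹(Q))*), then u₀ is independent of τ, i.e. u₀ ∈ L²(0,T;H¹(Q)). -/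

import Mathlib

open MeasureTheory Filter Set

noncomputable section

/-- Points of `ℝ^N`. -/
abbrev Vn (N : ℕ) := Fin N → ℝ

/-- The unit cell `𝒴 = (0,1)^N`. -/
def cellY (N : ℕ) : Set (Vn N) := Set.univ.pi fun _ => Set.Ioo (0:ℝ) 1

/-- The unit time cell `𝒯 = (0,1)`. -/
def cellT : Set ℝ := Set.Ioo 0 1

/-- `𝒵 = 𝒯 × 𝒴`-periodicity of a function of the fast variables `(τ,y)`. -/
def ZPer {N : ℕ} (w : ℝ → Vn N → ℝ) : Prop :=
  ∀ (τ : ℝ) (y : Vn N) (l : ℤ) (kk : Fin N → ℤ), w (τ + l) (fun i => y i + kk i) = w τ y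

/-- Admissible test functions: `ψ ∈ L^{p'}(Q_T; C_per(𝒯×𝒴))`, i.e. `ψ = ψ(t,x,τ,y)`
is jointly continuous, `𝒵`-periodic in `(τ,y)`, and dominated in modulus by an
`L^{p'}(Q_T)` function of `(t,x)`. -/
structure AdmissibleTest (N : ℕ) (QT : Set (ℝ × Vn N)) (p' : ℝ)
    (ψ : ℝ → Vn N → ℝ → Vn N → ℝ) : Prop where
  cont : Continuous fun q : (ℝ × Vn N) × ℝ × Vn N => ψ q.1.1 q.1.2 q.2.1 q.2.2
  per : ∀ t x, ZPer (ψ t x)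
  dom : ∃ h : ℝ × Vn N → ℝ, MemLp h (ENNReal.ofReal p') (volume.restrict QT) ∧
      ∀ t x τ y, |ψ t x τ y| ≤ h (t, x)

/-- Weak two-scale convergence in `L^p(Q_T)` of the sequence `u n` (with scale `ε n`)
to `u₀ ∈ L^p(Q_T; L^p_per(𝒯×𝒴))` (Definition 3.1 of the paper). -/
def WeakTwoScale (N : ℕ) (QT : Set (ℝ × Vn N)) (p : ℝ) (ε : ℕ → ℝ)
    (u : ℕ → ℝ × Vn N → ℝ) (u₀ : ℝ × Vn N → ℝ → Vn N → ℝ) : Prop :=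
  ∀ ψ : ℝ → Vn N → ℝ → Vn N → ℝ, AdmissibleTest N QT (p / (p - 1)) ψ →
    Tendsto (fun n => ∫ q in QT, u n q * ψ q.1 q.2 (q.1 / ε n) (fun i => q.2 i / ε n))
      atTop
      (nhds (∫ q in QT, ∫ τ in cellT, ∫ y in cellY N, u₀ q τ y * ψ q.1 q.2 τ y))

/-- Strong two-scale convergence in `L^p(Q_T)`: weak two-scale convergence together with
convergence of the `L^p` norms. -/
def StrongTwoScale (N : ℕ) (QT : Set (ℝ × Vn N)) (p : ℝ) (ε : ℕ → ℝ)
    (u : ℕ → ℝ × Vn N → ℝ) (u₀ : ℝ × Vn N → ℝ → Vn N → ℝ) : Prop :=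
  WeakTwoScale N QT p ε u u₀ ∧
    Tendsto (fun n => ∫ q in QT, |u n q| ^ p) atTop
      (nhds (∫ q in QT, ∫ τ in cellT, ∫ y in cellY N, |u₀ q τ y| ^ p))

/-- Partial derivative `∂f/∂y_j` of a function on `ℝ^N`. -/
def pdN {N : ℕ} (f : Vn N → ℝ) (j : Fin N) (y : Vn N) : ℝ := fderiv ℝ f y (Pi.single j 1)

/-!
Let `μ` be Lebesgue measure on the space-time domain, retract the domain into a compact box `B` and
send `(t, x)` to `(t, x, t/ε, x/ε)` in the compact space `B × 𝕋 × 𝕋ᴺ`. By the Riemann–Lebesgue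
lemma and Stone–Weierstrass the images of `μ` converge to `μ ⊗ dτ ⊗ dy`. Since the bound
`|∫ u_ε Ψ| ≤ ‖u_ε‖ (∫ |Ψ|²)^{1/2}` therefore survives the limit, every `L²`-bounded sequence has a
subsequence two-scale converging to an `L²` function; let `U` and `V` be the limits of `u_ε` and of
`∇u_ε`.

Integrate by parts against `ζ(t, x) exp(2πi (k₀ t + k · x) / ε)`. The most singular term, of order
`1/ε`, forces the modes of `U` with `k ≠ 0` to vanish, so `U` does not depend on `y`. Combining the
identities for two directions cancels that term and leaves `k_i V̂_j(k) = k_j V̂_i(k)`, so `V` minus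
its `y`-mean is a `y`-gradient, with potential obtained by dividing Fourier coefficients by
`2πi k`. The modes `k = 0` identify the mean of `V` as the `x`-gradient of `U`. A bound on the time
derivative kills the modes `k₀ ≠ 0` in the same way, since at `k = 0` the oscillating test
functions stay bounded in `L²(0,T;H¹)`.
-/

namespace TwoScale

open UnitAddTorus (mFourier mFourierCoeff mFourierLp)
open scoped FourierTransform

attribute [local instance] instMeasureSpaceUnitAddCircle
  instIsAddHaarMeasureUnitAddCircleVolume instIsProbabilityMeasureUnitAddCircleVolume

section WeakCompactness

variable {K Ω : Type*} [MeasurableSpace Ω] {μ : Measure Ω}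

lemma abs_integral_mul_le_sqrt_mul_sqrt {f g : Ω → ℝ} (hf : MemLp f 2 μ) (hg : MemLp g 2 μ) :
    |∫ q, f q * g q ∂μ| ≤ √(∫ q, f q ^ 2 ∂μ) * √(∫ q, g q ^ 2 ∂μ) := by
  have holder := integral_mul_le_Lp_mul_Lq_of_nonneg (μ := μ) Real.HolderConjugate.two_two
    (f := fun q => |f q|) (g := fun q => |g q|) (ae_of_all _ fun q => abs_nonneg _)
    (ae_of_all _ fun q => abs_nonneg _) (by rw [ENNReal.ofReal_ofNat]; exact hf.abs)
    (by rw [ENNReal.ofReal_ofNat]; exact hg.abs)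
  calc |∫ q, f q * g q ∂μ| ≤ ∫ q, |f q * g q| ∂μ := abs_integral_le_integral_abs
    _ = ∫ q, |f q| * |g q| ∂μ := by simp_rw [abs_mul]
    _ ≤ _ := holder
    _ = √(∫ q, f q ^ 2 ∂μ) * √(∫ q, g q ^ 2 ∂μ) := by simp [Real.sqrt_eq_rpow]

lemma tendsto_of_tendsto_on_dense_span {𝕜 E F ι : Type*} [NontriviallyNormedField 𝕜]
    [NormedAddCommGroup E] [NormedSpace 𝕜 E] [NormedAddCommGroup F] [NormedSpace 𝕜 F]
    {l : Filter ι} {s : Set E} (hs : (Submodule.span 𝕜 s).topologicalClosure = ⊤)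
    {L : ι → E →L[𝕜] F} {L₀ : E →L[𝕜] F} {c : ℝ} (hL : ∀ i, ‖L i‖ ≤ c)
    (h : ∀ x ∈ s, Tendsto (fun i => L i x) l (nhds (L₀ x))) (x : E) :
    Tendsto (fun i => L i x) l (nhds (L₀ x)) := by
  have equicont : Equicontinuous fun i => ⇑(L i) :=
    ((NormedSpace.equicontinuous_TFAE L).out 1 5).2 (show ∃ C, ∀ i, ‖L i‖ ≤ C from ⟨c, hL⟩)
  have on_span : ∀ y ∈ Submodule.span 𝕜 s, Tendsto (fun i => L i y) l (nhds (L₀ y)) := by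
    intro y hy
    induction hy using Submodule.span_induction with
    | mem y hy => exact h y hy
    | zero => simp only [map_zero, tendsto_const_nhds]
    | add y z _ _ hy hz => simpa only [map_add] using hy.add hz
    | smul a y _ hy => simpa only [map_smul] using hy.const_smul a
  have hx : x ∈ closure (Submodule.span 𝕜 s : Set E) := by
    rw [← Submodule.topologicalClosure_coe, hs]; trivial
  exact (equicont.isClosed_setOfPred_tendsto L₀.continuous).closure_subset_iff.2 on_span hx

section IntegralAlong

variable {𝕜 : Type*} [RCLike 𝕜] [TopologicalSpace K] [CompactSpace K] {ρ : Ω → K} {g : Ω → 𝕜}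

lemma norm_integral_mul_continuousMap_comp_le (hg : Integrable g μ) (Ψ : C(K, 𝕜)) :
    ‖∫ q, g q * Ψ (ρ q) ∂μ‖ ≤ (∫ q, ‖g q‖ ∂μ) * ‖Ψ‖ := by
  rw [← integral_mul_const]
  refine norm_integral_le_of_norm_le (hg.norm.mul_const _) (ae_of_all _ fun q => ?_)
  rw [norm_mul]
  gcongr
  exact Ψ.norm_coe_le_norm _

variable [MeasurableSpace K] [BorelSpace K]

lemma integrable_mul_continuousMap_comp (hρ : Measurable ρ) (hg : Integrable g μ) (Ψ : C(K, 𝕜)) :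
    Integrable (fun q => g q * Ψ (ρ q)) μ :=
  hg.mul_bdd (Ψ.continuous.measurable.comp hρ).aestronglyMeasurable
    (ae_of_all _ fun q => Ψ.norm_coe_le_norm (ρ q))

/-- The functional `Ψ ↦ ∫ g · (Ψ ∘ ρ) dμ` on continuous functions: the complex measure on `K`
obtained by transporting `g μ` along `ρ`. -/
def integralAlong (hρ : Measurable ρ) (hg : Integrable g μ) : C(K, 𝕜) →L[𝕜] 𝕜 :=
  LinearMap.mkContinuous
    { toFun := fun Ψ => ∫ q, g q * Ψ (ρ q) ∂μ
      map_add' := fun Ψ Φ => by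
        simp only [ContinuousMap.add_apply, mul_add]
        exact integral_add (integrable_mul_continuousMap_comp hρ hg Ψ)
          (integrable_mul_continuousMap_comp hρ hg Φ)
      map_smul' := fun c Ψ => by
        simp only [ContinuousMap.smul_apply, smul_eq_mul, RingHom.id_apply, mul_left_comm _ c]
        exact integral_const_mul _ _ }
    (∫ q, ‖g q‖ ∂μ) (norm_integral_mul_continuousMap_comp_le hg)

lemma integralAlong_apply (hρ : Measurable ρ) (hg : Integrable g μ) (Ψ : C(K, 𝕜)) :
    integralAlong hρ hg Ψ = ∫ q, g q * Ψ (ρ q) ∂μ := rfl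

lemma norm_integralAlong_le (hρ : Measurable ρ) (hg : Integrable g μ) :
    ‖integralAlong hρ hg‖ ≤ ∫ q, ‖g q‖ ∂μ :=
  LinearMap.mkContinuous_norm_le _ (integral_nonneg fun _ => norm_nonneg _) _

end IntegralAlong

/-- The images of `μ` under `ρ n` converge weakly to the measure `m`. -/
def Equidistributed [TopologicalSpace K] [MeasurableSpace K] (μ : Measure Ω) (ρ : ℕ → Ω → K)
    (m : Measure K) : Prop :=
  ∀ Ψ : C(K, ℝ), Tendsto (fun n => ∫ q, Ψ (ρ n q) ∂μ) atTop (nhds (∫ p, Ψ p ∂m))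

/-- The images of the signed measures `u n · μ` under `ρ n` converge weakly to `V · m`. When `ρ n`
is `q ↦ (q, q / ε n)` this is weak two-scale convergence. -/
def TendstoAlong [TopologicalSpace K] [MeasurableSpace K] (μ : Measure Ω) (ρ : ℕ → Ω → K)
    (m : Measure K) (u : ℕ → Ω → ℝ) (V : K → ℝ) : Prop :=
  ∀ Ψ : C(K, ℝ), Tendsto (fun n => ∫ q, u n q * Ψ (ρ n q) ∂μ) atTop (nhds (∫ p, V p * Ψ p ∂m))

variable [MetricSpace K] [CompactSpace K] [MeasurableSpace K] [BorelSpace K]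
  {m : Measure K} [IsFiniteMeasure m]

lemma norm_toLp_two (Ψ : C(K, ℝ)) :
    ‖(ContinuousMap.toLp 2 m ℝ : C(K, ℝ) →L[ℝ] Lp ℝ 2 m) Ψ‖ = √(∫ p, Ψ p ^ 2 ∂m) := by
  rw [eq_comm, Real.sqrt_eq_iff_mul_self_eq (integral_nonneg fun p => sq_nonneg (Ψ p))
    (norm_nonneg _), ← real_inner_self_eq_norm_mul_norm, ContinuousMap.inner_toLp]
  simp [sq]

lemma exists_memLp_two_forall_eq_integral_mul (L : C(K, ℝ) →L[ℝ] ℝ) {c : ℝ}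
    (hL : ∀ Ψ, |L Ψ| ≤ c * √(∫ p, Ψ p ^ 2 ∂m)) :
    ∃ V : K → ℝ, MemLp V 2 m ∧ ∀ Ψ : C(K, ℝ), L Ψ = ∫ p, V p * Ψ p ∂m := by
  let toL2 : C(K, ℝ) →L[ℝ] Lp ℝ 2 m := ContinuousMap.toLp 2 m ℝ
  have extends_L : ∀ Ψ, (L : C(K, ℝ) →ₗ[ℝ] ℝ).extendOfNorm (toL2 : C(K, ℝ) →ₗ[ℝ] Lp ℝ 2 m)
      (toL2 Ψ) = L Ψ :=
    LinearMap.extendOfNorm_eq (ContinuousMap.toLp_denseRange ℝ m ℝ ENNReal.ofNat_ne_top)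
      ⟨c, fun Ψ => by simpa [toL2, norm_toLp_two] using hL Ψ⟩
  let V : Lp ℝ 2 m := (InnerProductSpace.toDual ℝ (Lp ℝ 2 m)).symm
    ((L : C(K, ℝ) →ₗ[ℝ] ℝ).extendOfNorm (toL2 : C(K, ℝ) →ₗ[ℝ] Lp ℝ 2 m))
  refine ⟨V, Lp.memLp V, fun Ψ => ?_⟩
  have riesz : inner ℝ V (toL2 Ψ) = L Ψ :=
    (InnerProductSpace.toDual_symm_apply).trans (extends_L Ψ)
  rw [← riesz, L2.inner_def]
  refine integral_congr_ae ?_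
  filter_upwards [ContinuousMap.coeFn_toLp (p := 2) (𝕜 := ℝ) m Ψ] with p hp
  rw [hp, real_inner_eq_re_inner]
  simp [mul_comm]

lemma exists_tendsto_integralAlong {ρ : ℕ → Ω → K} (hρ : ∀ n, Measurable (ρ n)) {u : ℕ → Ω → ℝ}
    (hu : ∀ n, Integrable (u n) μ) {C : ℝ} (hC : ∀ n, ∫ q, ‖u n q‖ ∂μ ≤ C) :
    ∃ φ : ℕ → ℕ, StrictMono φ ∧ ∃ L : C(K, ℝ) →L[ℝ] ℝ,
      ∀ Ψ, Tendsto (fun n => integralAlong (hρ (φ n)) (hu (φ n)) Ψ) atTop (nhds (L Ψ)) := by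
  obtain ⟨L, -, φ, hφ, hL⟩ := WeakDual.isSeqCompact_closedBall ℝ C(K, ℝ) 0 C
    (x := fun n => StrongDual.toWeakDual (integralAlong (hρ n) (hu n)))
    fun n => mem_closedBall_zero_iff.2 ((norm_integralAlong_le (hρ n) (hu n)).trans (hC n))
  exact ⟨φ, hφ, WeakDual.toStrongDual L,
    fun Ψ => ((WeakDual.eval_continuous (𝕜 := ℝ) Ψ).tendsto L).comp hL⟩

variable [IsFiniteMeasure μ]

lemma memLp_continuousMap_comp {𝕜 : Type*} [RCLike 𝕜] {ρ : Ω → K} (hρ : Measurable ρ)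
    (Ψ : C(K, 𝕜)) (p : ENNReal) : MemLp (fun q => Ψ (ρ q)) p μ :=
  MemLp.of_bound (Ψ.continuous.measurable.comp hρ).aestronglyMeasurable ‖Ψ‖
    (ae_of_all _ fun q => Ψ.norm_coe_le_norm (ρ q))

lemma integral_norm_le_of_integral_sq_le {f : Ω → ℝ} (hf : MemLp f 2 μ) {C : ℝ}
    (hC : ∫ q, f q ^ 2 ∂μ ≤ C) : ∫ q, ‖f q‖ ∂μ ≤ √C * √(μ.real univ) := by
  have cauchy_schwarz := abs_integral_mul_le_sqrt_mul_sqrt hf.norm (memLp_const (μ := μ) (1 : ℝ))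
  simp only [mul_one, Real.norm_eq_abs, sq_abs, one_pow, integral_const, smul_eq_mul]
    at cauchy_schwarz
  exact (le_abs_self _).trans (cauchy_schwarz.trans (by gcongr))

theorem Equidistributed.exists_tendstoAlong {ρ : ℕ → Ω → K} (h : Equidistributed μ ρ m)
    (hρ : ∀ n, Measurable (ρ n)) {u : ℕ → Ω → ℝ} (hu : ∀ n, MemLp (u n) 2 μ) {C : ℝ}
    (hC : ∀ n, ∫ q, u n q ^ 2 ∂μ ≤ C) :
    ∃ φ : ℕ → ℕ, StrictMono φ ∧ ∃ V : K → ℝ, MemLp V 2 m ∧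
      TendstoAlong μ (fun n => ρ (φ n)) m (fun n => u (φ n)) V := by
  obtain ⟨φ, hφ, L, hL⟩ := exists_tendsto_integralAlong hρ
    (fun n => (hu n).integrable one_le_two)
    (fun n => integral_norm_le_of_integral_sq_le (hu n) (hC n))
  have bound : ∀ n (Ψ : C(K, ℝ)),
      |∫ q, u n q * Ψ (ρ n q) ∂μ| ≤ √C * √(∫ q, Ψ (ρ n q) ^ 2 ∂μ) := fun n Ψ =>
    (abs_integral_mul_le_sqrt_mul_sqrt (hu n) (memLp_continuousMap_comp (hρ n) Ψ 2)).trans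
      (by gcongr; exact hC n)
  -- Equidistribution of `Ψ ^ 2` turns the uniform bound into continuity of the limit for `L²(m)`.
  have limit_bound : ∀ Ψ, |L Ψ| ≤ √C * √(∫ p, Ψ p ^ 2 ∂m) := fun Ψ =>
    le_of_tendsto_of_tendsto' (hL Ψ).abs
      (((h (Ψ ^ 2)).comp hφ.tendsto_atTop).sqrt.const_mul √C) fun n => bound (φ n) Ψ
  obtain ⟨V, hV, hLV⟩ := exists_memLp_two_forall_eq_integral_mul L limit_bound
  exact ⟨φ, hφ, V, hV, fun Ψ => hLV Ψ ▸ hL Ψ⟩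

theorem Equidistributed.exists_forall_tendstoAlong {ι : Type*} [Finite ι] {ρ : ℕ → Ω → K}
    (h : Equidistributed μ ρ m) (hρ : ∀ n, Measurable (ρ n)) {u : ι → ℕ → Ω → ℝ}
    (hu : ∀ i n, MemLp (u i n) 2 μ) {C : ℝ} (hC : ∀ i n, ∫ q, u i n q ^ 2 ∂μ ≤ C) :
    ∃ φ : ℕ → ℕ, StrictMono φ ∧ ∃ V : ι → K → ℝ, ∀ i, MemLp (V i) 2 m ∧
      TendstoAlong μ (fun n => ρ (φ n)) m (fun n => u i (φ n)) (V i) := by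
  classical
  have := Fintype.ofFinite ι
  suffices ∀ s : Finset ι, ∃ φ : ℕ → ℕ, StrictMono φ ∧ ∃ V : ι → K → ℝ, ∀ i ∈ s,
      MemLp (V i) 2 m ∧ TendstoAlong μ (fun n => ρ (φ n)) m (fun n => u i (φ n)) (V i) by
    obtain ⟨φ, hφ, V, hV⟩ := this Finset.univ
    exact ⟨φ, hφ, V, fun i => hV i (Finset.mem_univ i)⟩
  intro s
  induction s using Finset.induction_on with
  | empty => exact ⟨id, strictMono_id, fun _ _ => 0, by simp⟩
  | insert a s ha ih =>
    obtain ⟨φ, hφ, V, hV⟩ := ih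
    have h_sub : Equidistributed μ (fun n => ρ (φ n)) m := fun Ψ => (h Ψ).comp hφ.tendsto_atTop
    obtain ⟨θ, hθ, W, hW⟩ := h_sub.exists_tendstoAlong (fun n => hρ _) (fun n => hu a (φ n))
      (fun n => hC a (φ n))
    refine ⟨φ ∘ θ, hφ.comp hθ, Function.update V a W, fun i hi => ?_⟩
    obtain rfl | hia := eq_or_ne i a
    · rw [Function.update_self]
      exact hW
    · obtain ⟨hV2, hVt⟩ := hV i (Finset.mem_of_mem_insert_of_ne hi hia)
      rw [Function.update_of_ne hia]
      exact ⟨hV2, fun Ψ => (hVt Ψ).comp hθ.tendsto_atTop⟩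

end WeakCompactness

section L2Density

variable {X : Type*} [MeasurableSpace X] {μ : Measure X}

/-- The functional `v ↦ ∫ a v dμ` on `L²(μ)`. -/
def integralMul {a : X → ℝ} (ha : MemLp a 2 μ) : Lp ℝ 2 μ →L[ℝ] ℝ := innerSL ℝ (ha.toLp a)

lemma integralMul_toLp {a v : X → ℝ} (ha : MemLp a 2 μ) (hv : MemLp v 2 μ) :
    integralMul ha (hv.toLp v) = ∫ x, a x * v x ∂μ := by
  rw [integralMul, innerSL_apply_apply, L2.inner_def]
  refine integral_congr_ae ?_
  filter_upwards [ha.coeFn_toLp, hv.coeFn_toLp] with x hax hvx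
  simp [hax, hvx, mul_comm]

lemma norm_integralMul {a : X → ℝ} (ha : MemLp a 2 μ) :
    ‖integralMul ha‖ = √(∫ x, a x ^ 2 ∂μ) := by
  rw [integralMul, innerSL_apply_norm, eq_comm,
    Real.sqrt_eq_iff_mul_self_eq (integral_nonneg fun x => sq_nonneg (a x)) (norm_nonneg _),
    ← real_inner_self_eq_norm_mul_norm]
  simp only [sq]
  exact (integralMul_toLp ha ha).symm

lemma tendsto_integral_mul_of_forall_continuous [TopologicalSpace X] [NormalSpace X]
    [BorelSpace X] [SecondCountableTopology X] [μ.WeaklyRegular] [IsFiniteMeasure μ]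
    {a : ℕ → X → ℝ} {a₀ : X → ℝ} (ha : ∀ n, MemLp (a n) 2 μ) (ha₀ : MemLp a₀ 2 μ)
    {C : ℝ} (hC : ∀ n, ∫ x, a n x ^ 2 ∂μ ≤ C)
    (h : ∀ g : X → ℝ, Continuous g →
      Tendsto (fun n => ∫ x, a n x * g x ∂μ) atTop (nhds (∫ x, a₀ x * g x ∂μ)))
    {v : X → ℝ} (hv : MemLp v 2 μ) :
    Tendsto (fun n => ∫ x, a n x * v x ∂μ) atTop (nhds (∫ x, a₀ x * v x ∂μ)) := by
  simp only [← integralMul_toLp _ hv, ha, ha₀]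
  let toL2 : BoundedContinuousFunction X ℝ →L[ℝ] Lp ℝ 2 μ :=
    BoundedContinuousFunction.toLp 2 μ ℝ
  have dense : (Submodule.span ℝ (range toL2)).topologicalClosure = ⊤ :=
    Submodule.dense_iff_topologicalClosure_eq_top.1
      ((BoundedContinuousFunction.toLp_denseRange (p := 2) ℝ μ ℝ ENNReal.ofNat_ne_top).mono
        Submodule.subset_span)
  refine tendsto_of_tendsto_on_dense_span dense (L := fun n => integralMul (ha n))
    (fun n => (norm_integralMul (ha n)).trans_le (Real.sqrt_le_sqrt (hC n))) ?_ _
  rintro _ ⟨g, rfl⟩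
  have hg : MemLp g 2 μ := g.memLp_top.mono_exponent le_top
  change Tendsto (fun n => integralMul (ha n) (hg.toLp g)) atTop
    (nhds (integralMul ha₀ (hg.toLp g)))
  simpa only [integralMul_toLp] using h g g.continuous

end L2Density

section RiemannLebesgue

lemma tendsto_integral_fourierChar_div_mul {V : Type*} [NormedAddCommGroup V] [NormedSpace ℝ V]
    [FiniteDimensional ℝ V] [MeasurableSpace V] [BorelSpace V] (ν : Measure V)
    [ν.IsAddHaarMeasure] {S : Set V} (hS : MeasurableSet S) (f : V → ℂ) {L : V →L[ℝ] ℝ} (hL : L ≠ 0)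
    {ε : ℕ → ℝ} (hε : ∀ n, 0 < ε n) (hε₀ : Tendsto ε atTop (nhds 0)) :
    Tendsto (fun n => ∫ v in S, f v * 𝐞 (L v / ε n) ∂ν) atTop (nhds 0) := by
  have freq : Tendsto (fun n => (-(ε n)⁻¹) • L) atTop (cocompact (StrongDual ℝ V)) := by
    rw [← Metric.cobounded_eq_cocompact, ← tendsto_norm_atTop_iff_cobounded]
    simp only [norm_smul, norm_neg, norm_inv, Real.norm_of_nonneg (hε _).le]
    exact (Tendsto.inv_tendsto_nhdsGT_zero
      (tendsto_nhdsWithin_iff.2 ⟨hε₀, Eventually.of_forall hε⟩)).atTop_mul_const (norm_pos_iff.2 hL)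
  refine ((tendsto_integral_exp_smul_cocompact (S.indicator f) ν).comp freq).congr fun n => ?_
  rw [Function.comp_apply, ← integral_indicator hS]
  congr 1 with v
  by_cases hv : v ∈ S
  · simp only [hv, indicator_of_mem, Circle.smul_def, smul_eq_mul, mul_comm]
    simp [div_eq_inv_mul]
  · simp [hv]

end RiemannLebesgue

section Torus

variable {d : Type*}

/-- The projection `ℝᵈ → ℝᵈ / ℤᵈ`. -/
def toTorus (y : d → ℝ) : UnitAddTorus d := fun i => (y i : UnitAddCircle)

lemma continuous_toTorus : Continuous (toTorus (d := d)) :=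
  continuous_pi fun i => (AddCircle.continuous_mk' 1).comp (continuous_apply i)

lemma fourier_coe_eq_fourierChar (k : ℤ) (s : ℝ) :
    fourier k (s : UnitAddCircle) = (𝐞 (k * s) : ℂ) := by
  rw [fourier_coe_apply, Real.fourierChar_apply]
  push_cast
  ring_nf

lemma integral_fourier (k : ℤ) :
    ∫ s : UnitAddCircle, fourier k s = if k = 0 then 1 else 0 := by
  split_ifs with hk
  · simp [hk]
  · exact integral_eq_zero_of_add_right_eq_neg (fourier_add_half_inv_index hk one_pos)

variable [Fintype d]

lemma mFourier_toTorus (k : d → ℤ) (y : d → ℝ) :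
    mFourier k (toTorus y) = (𝐞 (∑ i, k i * y i) : ℂ) := by
  simp only [mFourier, ContinuousMap.coe_mk, toTorus, fourier_coe_eq_fourierChar,
    Real.fourierChar_apply, ← Complex.exp_sum, Finset.mul_sum, Complex.ofReal_sum, Finset.sum_mul]

lemma integral_mFourier (k : d → ℤ) : ∫ y, mFourier k y = if k = 0 then 1 else 0 := by
  simp only [mFourier, ContinuousMap.coe_mk]
  rw [integral_fintype_prod_volume_eq_prod (fun i (s : UnitAddCircle) => fourier (k i) s)]
  simp only [integral_fourier, Finset.prod_ite_zero, Finset.prod_const_one, Finset.mem_univ,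
    true_implies, funext_iff, Pi.zero_apply]

end Torus

section TwoScaleSpace

variable {B d : Type*}

/-- The space of macroscopic points `b` together with the fast variables `(τ, y)`, the latter taken
on the circle and the torus so that continuity encodes periodicity. -/
abbrev TwoScaleSpace (B d : Type*) := (B × UnitAddCircle) × UnitAddTorus d

variable [TopologicalSpace B]

/-- The map `q = (t, x) ↦ (q, t / e, x / e)`, the macroscopic point `q` being read in the compact
space `B` through `r`. -/
def twoScaleMap (r : C(ℝ × (d → ℝ), B)) (e : ℝ) : C(ℝ × (d → ℝ), TwoScaleSpace B d) where
  toFun q := ((r q, ((q.1 / e : ℝ) : UnitAddCircle)), toTorus fun i => q.2 i / e)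
  continuous_toFun := by
    refine (r.continuous.prodMk ?_).prodMk (continuous_toTorus.comp (by fun_prop))
    exact (AddCircle.continuous_mk' 1).comp (by fun_prop)

/-- The limit of the images of `μ` under `twoScaleMap r e` as `e → 0`. -/
abbrev twoScaleMeasure [MeasurableSpace B] [Fintype d] (μ : Measure (ℝ × (d → ℝ)))
    (r : C(ℝ × (d → ℝ), B)) : Measure (TwoScaleSpace B d) :=
  ((μ.map r).prod volume).prod volume

variable [Fintype d]

/-- The linear form `(t, x) ↦ k₀ t + k · x`. -/
def phase (k₀ : ℤ) (k : d → ℤ) : (ℝ × (d → ℝ)) →L[ℝ] ℝ :=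
  (k₀ : ℝ) • ContinuousLinearMap.fst ℝ ℝ (d → ℝ) +
    ∑ i, (k i : ℝ) • (ContinuousLinearMap.proj i).comp (ContinuousLinearMap.snd ℝ ℝ (d → ℝ))

lemma phase_apply (k₀ : ℤ) (k : d → ℤ) (q : ℝ × (d → ℝ)) :
    phase k₀ k q = k₀ * q.1 + ∑ i, k i * q.2 i := by
  simp [phase]

lemma phase_one_zero (k₀ : ℤ) (k : d → ℤ) : phase k₀ k (1, 0) = k₀ := by
  simp [phase_apply]

lemma phase_zero_single [DecidableEq d] (k₀ : ℤ) (k : d → ℤ) (i : d) :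
    phase k₀ k (0, Pi.single i 1) = k i := by
  simp [phase_apply, Pi.single_apply]

lemma phase_ne_zero {k₀ : ℤ} {k : d → ℤ} (h : ¬(k₀ = 0 ∧ k = 0)) : phase k₀ k ≠ 0 := by
  classical
  intro h₀
  refine h ⟨?_, funext fun i => ?_⟩
  · simpa [h₀, eq_comm] using phase_one_zero k₀ k
  · simpa [h₀, eq_comm] using phase_zero_single k₀ k i

/-- The function `(b, τ, y) ↦ f b · exp (2πi (k₀ τ + k · y))`. -/
def twoScaleChar (f : C(B, ℂ)) (k₀ : ℤ) (k : d → ℤ) : C(TwoScaleSpace B d, ℂ) where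
  toFun p := f p.1.1 * fourier k₀ p.1.2 * mFourier k p.2
  continuous_toFun := by fun_prop

lemma twoScaleChar_apply (f : C(B, ℂ)) (k₀ : ℤ) (k : d → ℤ) (p : TwoScaleSpace B d) :
    twoScaleChar f k₀ k p = f p.1.1 * fourier k₀ p.1.2 * mFourier k p.2 := rfl

lemma twoScaleChar_twoScaleMap (r : C(ℝ × (d → ℝ), B)) (e : ℝ) (f : C(B, ℂ)) (k₀ : ℤ) (k : d → ℤ)
    (q : ℝ × (d → ℝ)) :
    twoScaleChar f k₀ k (twoScaleMap r e q) = f (r q) * 𝐞 (phase k₀ k q / e) := by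
  simp only [twoScaleChar_apply, twoScaleMap, ContinuousMap.coe_mk, fourier_coe_eq_fourierChar,
    mFourier_toTorus, mul_assoc, ← Circle.coe_mul, ← AddChar.map_add_eq_mul, phase_apply, add_div,
    Finset.sum_div, mul_div_assoc]

lemma integral_twoScaleChar [MeasurableSpace B] [BorelSpace B] (μ : Measure (ℝ × (d → ℝ)))
    [SFinite μ] (r : C(ℝ × (d → ℝ), B)) (f : C(B, ℂ)) (k₀ : ℤ) (k : d → ℤ) :
    ∫ p, twoScaleChar f k₀ k p ∂twoScaleMeasure μ r =
      if k₀ = 0 ∧ k = 0 then ∫ q, f (r q) ∂μ else 0 := by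
  simp only [twoScaleChar_apply, twoScaleMeasure]
  rw [integral_prod_mul (fun s : B × UnitAddCircle => f s.1 * fourier k₀ s.2)
      (fun y => mFourier k y), integral_prod_mul (fun b => f b) (fun s => fourier k₀ s),
    integral_map r.continuous.aemeasurable f.continuous.aestronglyMeasurable,
    integral_fourier, integral_mFourier]
  by_cases hk₀ : k₀ = 0 <;> by_cases hk : k = 0 <;> simp [hk₀, hk]

/-- The star algebra generated by the functions `twoScaleChar f k₀ k`. -/
def twoScaleCharAlgebra (B d : Type*) [TopologicalSpace B] [CompactSpace B] [Fintype d] :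
    StarSubalgebra ℂ C(TwoScaleSpace B d, ℂ) where
  toSubalgebra := Algebra.adjoin ℂ
    (range fun s : C(B, ℂ) × ℤ × (d → ℤ) => twoScaleChar s.1 s.2.1 s.2.2)
  star_mem' := by
    change Algebra.adjoin ℂ _ ≤ star (Algebra.adjoin ℂ _)
    refine Algebra.adjoin_le ?_
    rintro _ ⟨⟨f, k₀, k⟩, rfl⟩
    refine Algebra.subset_adjoin ⟨⟨star f, -k₀, -k⟩, ?_⟩
    ext1 p
    simp [twoScaleChar_apply, UnitAddTorus.mFourier_neg]

lemma twoScaleCharAlgebra_toSubmodule [CompactSpace B] :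
    (twoScaleCharAlgebra B d).toSubalgebra.toSubmodule = Submodule.span ℂ
      (range fun s : C(B, ℂ) × ℤ × (d → ℤ) => twoScaleChar s.1 s.2.1 s.2.2) := by
  apply Algebra.adjoin_eq_span_of_subset
  refine .trans (fun Ψ ↦ Submonoid.closure_induction (fun _ ↦ id) ⟨⟨1, 0, 0⟩, ?_⟩ ?_)
    Submodule.subset_span
  · ext p
    simp [twoScaleChar_apply, UnitAddTorus.mFourier_zero]
  · rintro _ _ _ _ ⟨⟨f, k₀, k⟩, rfl⟩ ⟨⟨g, l₀, l⟩, rfl⟩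
    refine ⟨⟨f * g, k₀ + l₀, k + l⟩, ?_⟩
    ext p
    simp only [twoScaleChar_apply, ContinuousMap.mul_apply, fourier_add, UnitAddTorus.mFourier_add]
    ring

lemma fourier_one_injective : Function.Injective (fourier (T := (1 : ℝ)) 1) := fun s t h =>
  AddCircle.injective_toCircle one_ne_zero (Circle.ext (by simpa only [fourier_one] using h))

end TwoScaleSpace

section Density

variable {B d : Type*} [MetricSpace B] [CompactSpace B] [Fintype d]

lemma twoScaleCharAlgebra_separatesPoints : (twoScaleCharAlgebra B d).SeparatesPoints := by
  classical
  have char_mem : ∀ f k₀ k, twoScaleChar f k₀ k ∈ twoScaleCharAlgebra B d := fun f k₀ k =>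
    Algebra.subset_adjoin ⟨⟨f, k₀, k⟩, rfl⟩
  rintro ⟨⟨b, τ⟩, y⟩ ⟨⟨b', τ'⟩, y'⟩ hne
  by_cases hb : b = b'
  · by_cases hτ : τ = τ'
    · obtain ⟨i, hi⟩ : ∃ i, y i ≠ y' i := by
        by_contra! h
        exact hne (by rw [hb, hτ, funext h])
      refine ⟨_, ⟨twoScaleChar 1 0 (Pi.single i 1), char_mem _ _ _, rfl⟩, fun h => hi ?_⟩
      exact fourier_one_injective
        (by simpa [twoScaleChar_apply, UnitAddTorus.mFourier_single] using h)
    · refine ⟨_, ⟨twoScaleChar 1 1 0, char_mem _ _ _, rfl⟩, fun h => hτ ?_⟩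
      exact fourier_one_injective
        (by simpa [twoScaleChar_apply, UnitAddTorus.mFourier_zero] using h)
  · refine ⟨_, ⟨twoScaleChar ⟨fun x => (dist x b : ℂ), by fun_prop⟩ 0 0, char_mem _ _ _, rfl⟩,
      fun h => hb ?_⟩
    simpa [twoScaleChar_apply, UnitAddTorus.mFourier_zero, eq_comm] using h

theorem span_twoScaleChar_closure_eq_top :
    (Submodule.span ℂ (range fun s : C(B, ℂ) × ℤ × (d → ℤ) =>
      twoScaleChar s.1 s.2.1 s.2.2)).topologicalClosure = ⊤ := by
  rw [← twoScaleCharAlgebra_toSubmodule]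
  exact congr_arg (Subalgebra.toSubmodule <| StarSubalgebra.toSubalgebra ·)
    (ContinuousMap.starSubalgebra_topologicalClosure_eq_top_of_separatesPoints _
      twoScaleCharAlgebra_separatesPoints)

lemma ae_eq_zero_of_forall_integral_mul_continuousMap_eq_zero {K : Type*} [MetricSpace K]
    [CompactSpace K] [MeasurableSpace K] [BorelSpace K] {m : Measure K} [IsFiniteMeasure m]
    {G : K → ℂ} (hG : MemLp G 2 m) (h : ∀ Ψ : C(K, ℂ), ∫ p, G p * Ψ p ∂m = 0) : G =ᵐ[m] 0 := by
  suffices hG.toLp G = 0 from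
    hG.coeFn_toLp.symm.trans ((Lp.eq_zero_iff_ae_eq_zero).1 this)
  refine (ContinuousMap.toLp_denseRange ℂ m ℂ (p := 2)
    ENNReal.ofNat_ne_top).eq_zero_of_inner_right ℂ fun Ψ => ?_
  rw [L2.inner_def, ← h (star Ψ)]
  refine integral_congr_ae ?_
  filter_upwards [ContinuousMap.coeFn_toLp (p := 2) (𝕜 := ℂ) m Ψ, hG.coeFn_toLp] with p hΨ hGp
  rw [hΨ, hGp]
  simp

variable [MeasurableSpace B] [BorelSpace B]

theorem ae_eq_zero_of_forall_integral_mul_twoScaleChar_eq_zero {m : Measure (TwoScaleSpace B d)}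
    [IsFiniteMeasure m] {G : TwoScaleSpace B d → ℂ} (hG : MemLp G 2 m)
    (h : ∀ f k₀ k, ∫ p, G p * twoScaleChar f k₀ k p ∂m = 0) : G =ᵐ[m] 0 := by
  refine ae_eq_zero_of_forall_integral_mul_continuousMap_eq_zero hG fun Ψ => ?_
  let L : C(TwoScaleSpace B d, ℂ) →L[ℂ] ℂ :=
    integralAlong measurable_id (hG.integrable one_le_two)
  have on_chars := tendsto_of_tendsto_on_dense_span (l := atTop (α := ℕ))
    span_twoScaleChar_closure_eq_top (L := fun _ => L) (L₀ := 0) (fun _ => le_rfl)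
    (by
      rintro _ ⟨⟨f, k₀, k⟩, rfl⟩
      have : L (twoScaleChar f k₀ k) = 0 := h f k₀ k
      simp only [this, zero_apply, tendsto_const_nhds]) Ψ
  exact tendsto_nhds_unique tendsto_const_nhds on_chars

variable {S : Set (ℝ × (d → ℝ))} [IsFiniteMeasure (volume.restrict S)] {ε : ℕ → ℝ}

lemma tendsto_setIntegral_twoScaleMap (hS : MeasurableSet S) (r : C(ℝ × (d → ℝ), B))
    (hε : ∀ n, 0 < ε n) (hε₀ : Tendsto ε atTop (nhds 0)) (Ψ : C(TwoScaleSpace B d, ℂ)) :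
    Tendsto (fun n => ∫ q in S, Ψ (twoScaleMap r (ε n) q)) atTop
      (nhds (∫ p, Ψ p ∂twoScaleMeasure (volume.restrict S) r)) := by
  have haar : (volume : Measure (ℝ × (d → ℝ))).IsAddHaarMeasure :=
    inferInstanceAs ((volume : Measure ℝ).prod (volume : Measure (d → ℝ))).IsAddHaarMeasure
  have on_chars : ∀ f k₀ k,
      Tendsto (fun n => ∫ q in S, twoScaleChar f k₀ k (twoScaleMap r (ε n) q)) atTop
        (nhds (∫ p, twoScaleChar f k₀ k p ∂twoScaleMeasure (volume.restrict S) r)) := by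
    intro f k₀ k
    simp only [twoScaleChar_twoScaleMap, integral_twoScaleChar]
    split_ifs with hk
    · obtain ⟨rfl, rfl⟩ := hk
      simp [phase_apply]
    · exact tendsto_integral_fourierChar_div_mul volume hS (fun q => f (r q)) (phase_ne_zero hk)
        hε hε₀
  have := tendsto_of_tendsto_on_dense_span span_twoScaleChar_closure_eq_top
    (L := fun n => integralAlong (twoScaleMap r (ε n)).measurable
      (integrable_const (1 : ℂ)))
    (L₀ := integralAlong (μ := twoScaleMeasure (volume.restrict S) r) measurable_id
      (integrable_const (1 : ℂ)))
    (fun n => norm_integralAlong_le _ _) (l := atTop) (by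
      rintro _ ⟨⟨f, k₀, k⟩, rfl⟩
      simpa only [integralAlong_apply, one_mul, id] using on_chars f k₀ k) Ψ
  simpa only [integralAlong_apply, one_mul, id] using this

theorem equidistributed_twoScaleMap (hS : MeasurableSet S) (r : C(ℝ × (d → ℝ), B))
    (hε : ∀ n, 0 < ε n) (hε₀ : Tendsto ε atTop (nhds 0)) :
    Equidistributed (volume.restrict S) (fun n => twoScaleMap r (ε n))
      (twoScaleMeasure (volume.restrict S) r) := by
  intro Ψ
  have := tendsto_setIntegral_twoScaleMap hS r hε hε₀ ⟨fun p => (Ψ p : ℂ), by fun_prop⟩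
  simp only [ContinuousMap.coe_mk, integral_complex_ofReal] at this
  exact (Complex.continuous_re.tendsto _).comp this

end Density

section Torus

variable {d : Type*} [Fintype d]

lemma measurePreserving_coe_unitAddCircle (a : ℝ) :
    MeasurePreserving (fun s : ℝ => (s : UnitAddCircle)) (volume.restrict (Ioo a (a + 1)))
      volume := by
  have := AddCircle.measurePreserving_mk 1 a
  rwa [AddCircle.volume_eq_smul_haarAddCircle, ENNReal.ofReal_one, one_smul,
    ← restrict_Ioo_eq_restrict_Ioc] at this

lemma measurePreserving_toTorus (a : d → ℝ) :
    MeasurePreserving toTorus (volume.restrict (univ.pi fun i => Ioo (a i) (a i + 1))) volume := by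
  have := measurePreserving_pi (fun i => volume.restrict (Ioo (a i) (a i + 1))) (fun _ => volume)
    (fun i => measurePreserving_coe_unitAddCircle (a i))
  rwa [← Measure.restrict_pi_pi] at this

lemma exists_map_toTorus_restrict_le {A : Set (d → ℝ)} (hA : IsCompact A) :
    ∃ c : ENNReal, c ≠ ⊤ ∧ (volume.restrict A).map toTorus ≤ c • volume := by
  refine hA.induction_on (p := fun A => ∃ c : ENNReal, c ≠ ⊤ ∧
    (volume.restrict A).map toTorus ≤ c • volume) ⟨0, by simp⟩ ?_ ?_ fun y _ => ?_
  · rintro s t hst ⟨c, hc, ht⟩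
    exact ⟨c, hc, (Measure.map_mono (Measure.restrict_mono hst le_rfl)
      continuous_toTorus.measurable).trans ht⟩
  · rintro s t ⟨c, hc, hs⟩ ⟨c', hc', ht⟩
    refine ⟨c + c', ENNReal.add_ne_top.2 ⟨hc, hc'⟩, ?_⟩
    calc (volume.restrict (s ∪ t)).map toTorus
        ≤ (volume.restrict s + volume.restrict t).map toTorus :=
          Measure.map_mono (Measure.restrict_union_le s t) continuous_toTorus.measurable
      _ = (volume.restrict s).map toTorus + (volume.restrict t).map toTorus :=
          Measure.map_add _ _ continuous_toTorus.measurable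
      _ ≤ c • volume + c' • volume := add_le_add hs ht
      _ = (c + c') • volume := (add_smul _ _ _).symm
  · let cell := univ.pi fun i => Ioo (y i - 2⁻¹) (y i - 2⁻¹ + 1)
    have cell_nhds : cell ∈ nhds y := set_pi_mem_nhds finite_univ fun i _ =>
      Ioo_mem_nhds (by linarith) (by linarith)
    refine ⟨cell, mem_nhdsWithin_of_mem_nhds cell_nhds, 1, ENNReal.one_ne_top, ?_⟩
    rw [(measurePreserving_toTorus _).map_eq, one_smul]

lemma locallyIntegrable_comp_toTorus {E : Type*} [NormedAddCommGroup E] {g : UnitAddTorus d → E}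
    (hg : Integrable g) : LocallyIntegrable fun y => g (toTorus y) := by
  rw [locallyIntegrable_iff]
  intro A hA
  obtain ⟨c, hc, hle⟩ := exists_map_toTorus_restrict_le hA
  exact ((hg.smul_measure hc).mono_measure hle).comp_measurable continuous_toTorus.measurable

section TestFunction

variable {E : Type*} [NormedAddCommGroup E] [NormedSpace ℝ E] {F : (d → ℝ) → ℝ}

lemma integrable_smul_comp_toTorus (hF : Continuous F) (hFc : HasCompactSupport F)
    {g : UnitAddTorus d → E} (hg : Integrable g) : Integrable fun y => F y • g (toTorus y) :=
  (locallyIntegrable_comp_toTorus hg).integrable_smul_left_of_hasCompactSupport hF hFc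

lemma exists_norm_integral_smul_comp_toTorus_le (hF : Continuous F) (hFc : HasCompactSupport F) :
    ∃ C, ∀ g : UnitAddTorus d → E, Integrable g →
      ‖∫ y, F y • g (toTorus y)‖ ≤ C * ∫ x, ‖g x‖ := by
  obtain ⟨M, hM⟩ := hFc.exists_bound_of_continuous hF
  obtain ⟨c, hc, hle⟩ := exists_map_toTorus_restrict_le hFc.isCompact
  have hM₀ : 0 ≤ M := (norm_nonneg _).trans (hM 0)
  refine ⟨M * c.toReal, fun g hg => ?_⟩
  have hg_norm : IntegrableOn (fun y => ‖g (toTorus y)‖) (tsupport F) :=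
    (locallyIntegrable_iff.1 (locallyIntegrable_comp_toTorus hg) _ hFc.isCompact).norm
  calc ‖∫ y, F y • g (toTorus y)‖ = ‖∫ y in tsupport F, F y • g (toTorus y)‖ := by
        rw [setIntegral_eq_integral_of_forall_compl_eq_zero fun y hy => by
          rw [image_eq_zero_of_notMem_tsupport hy, zero_smul]]
    _ ≤ ∫ y in tsupport F, M * ‖g (toTorus y)‖ :=
        norm_integral_le_of_norm_le (hg_norm.const_mul M) (ae_of_all _ fun y => by
          rw [norm_smul]; gcongr; exact hM y)
    _ = M * ∫ x, ‖g x‖ ∂(volume.restrict (tsupport F)).map toTorus := by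
        rw [integral_const_mul, integral_map continuous_toTorus.aemeasurable]
        exact ((hg.smul_measure hc).mono_measure hle).norm.aestronglyMeasurable
    _ ≤ M * ∫ x, ‖g x‖ ∂(c • volume) :=
        mul_le_mul_of_nonneg_left (integral_mono_measure hle (ae_of_all _ fun x => norm_nonneg _)
          (hg.smul_measure hc).norm) hM₀
    _ = M * c.toReal * ∫ x, ‖g x‖ := by
        rw [integral_smul_measure, smul_eq_mul, mul_assoc]

lemma integral_smul_comp_toTorus_congr_ae (hF : Continuous F) (hFc : HasCompactSupport F)
    {f g : UnitAddTorus d → E} (hf : Integrable f) (hfg : f =ᵐ[volume] g) :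
    ∫ y, F y • f (toTorus y) = ∫ y, F y • g (toTorus y) := by
  obtain ⟨C, hC⟩ := exists_norm_integral_smul_comp_toTorus_le (E := E) hF hFc
  have hg := hf.congr hfg
  have hsub := hC (fun x => f x - g x) (hf.sub hg)
  rw [integral_congr_ae (g := 0) (hfg.mono fun x hx => by simp [hx])] at hsub
  simp only [smul_sub, Pi.zero_apply, integral_zero, mul_zero, norm_le_zero_iff] at hsub
  rwa [integral_sub (integrable_smul_comp_toTorus hF hFc hf)
    (integrable_smul_comp_toTorus hF hFc hg), sub_eq_zero] at hsub

end TestFunction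

lemma integral_norm_le_norm_Lp_two {X E : Type*} [MeasurableSpace X] {ν : Measure X}
    [IsProbabilityMeasure ν] [NormedAddCommGroup E] (f : Lp E 2 ν) : ∫ x, ‖f x‖ ∂ν ≤ ‖f‖ := by
  rw [Lp.norm_def, integral_norm_eq_lintegral_enorm (Lp.aestronglyMeasurable f),
    ← eLpNorm_one_eq_lintegral_enorm]
  exact ENNReal.toReal_mono (Lp.eLpNorm_ne_top f)
    (eLpNorm_le_eLpNorm_of_exponent_le one_le_two (Lp.aestronglyMeasurable f))

lemma mFourierCoeff_congr_ae {f g : UnitAddTorus d → ℂ} (h : f =ᵐ[volume] g) (k : d → ℤ) :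
    mFourierCoeff f k = mFourierCoeff g k :=
  integral_congr_ae (h.mono fun x hx => by simp only [hx])

section FourierSeries

variable {F : (d → ℝ) → ℝ}

lemma exists_continuousLinearMap_toLp_eq_integral_smul_comp_toTorus (hF : Continuous F)
    (hFc : HasCompactSupport F) :
    ∃ Λ : Lp ℂ 2 (volume : Measure (UnitAddTorus d)) →L[ℂ] ℂ,
      ∀ (g : UnitAddTorus d → ℂ) (hg : MemLp g 2), Λ (hg.toLp g) = ∫ y, F y • g (toTorus y) := by
  obtain ⟨C, hC⟩ := exists_norm_integral_smul_comp_toTorus_le (E := ℂ) hF hFc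
  have integrable_Lp : ∀ f : Lp ℂ 2 (volume : Measure (UnitAddTorus d)), Integrable f :=
    fun f => (Lp.memLp f).integrable one_le_two
  let Λ : Lp ℂ 2 (volume : Measure (UnitAddTorus d)) →ₗ[ℂ] ℂ :=
    { toFun := fun f => ∫ y, F y • f (toTorus y)
      map_add' := fun f g => by
        rw [integral_smul_comp_toTorus_congr_ae hF hFc (integrable_Lp _) (Lp.coeFn_add f g),
          ← integral_add (integrable_smul_comp_toTorus hF hFc (integrable_Lp f))
            (integrable_smul_comp_toTorus hF hFc (integrable_Lp g))]
        simp only [Pi.add_apply, smul_add]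
      map_smul' := fun a f => by
        rw [integral_smul_comp_toTorus_congr_ae hF hFc (integrable_Lp _) (Lp.coeFn_smul a f),
          RingHom.id_apply, ← integral_smul]
        simp only [Pi.smul_apply, smul_comm a] }
  refine ⟨Λ.mkContinuous |C| fun f => ?_, fun g hg =>
    integral_smul_comp_toTorus_congr_ae hF hFc (integrable_Lp _) hg.coeFn_toLp⟩
  calc ‖∫ y, F y • f (toTorus y)‖ ≤ C * ∫ x, ‖f x‖ := hC f (integrable_Lp f)
    _ ≤ |C| * ∫ x, ‖f x‖ :=
        mul_le_mul_of_nonneg_right (le_abs_self C) (integral_nonneg fun x => norm_nonneg _)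
    _ ≤ |C| * ‖f‖ := mul_le_mul_of_nonneg_left (integral_norm_le_norm_Lp_two f) (abs_nonneg C)

lemma hasSum_mFourierCoeff_mul_integral_smul_mFourier (hF : Continuous F)
    (hFc : HasCompactSupport F) {g : UnitAddTorus d → ℂ} (hg : MemLp g 2) :
    HasSum (fun k => mFourierCoeff g k * ∫ y, F y • mFourier k (toTorus y))
      (∫ y, F y • g (toTorus y)) := by
  obtain ⟨Λ, hΛ⟩ := exists_continuousLinearMap_toLp_eq_integral_smul_comp_toTorus hF hFc
  have hchar : ∀ k, Λ (mFourierLp 2 k) = ∫ y, F y • mFourier k (toTorus y) := fun k =>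
    hΛ _ (memLp_continuousMap_comp measurable_id (mFourier k) 2)
  have hseries := (UnitAddTorus.hasSum_mFourier_series_L2 (hg.toLp g)).mapL Λ
  rw [hΛ g hg] at hseries
  simpa only [map_smul, smul_eq_mul, hchar, mFourierCoeff_congr_ae hg.coeFn_toLp] using hseries

end FourierSeries

end Torus

section TestFunctions

variable {V : Type*} [NormedAddCommGroup V] [NormedSpace ℝ V] {F : Type*} [NormedAddCommGroup F]
  [NormedSpace ℝ F] {S : Set V}

/-- Smooth test functions with compact support in `S`. -/
structure IsTestFunction (S : Set V) (ζ : V → F) : Prop where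
  contDiff : ContDiff ℝ (⊤ : ℕ∞) ζ
  hasCompactSupport : HasCompactSupport ζ
  tsupport_subset : tsupport ζ ⊆ S

namespace IsTestFunction

lemma continuous {ζ : V → F} (hζ : IsTestFunction S ζ) : Continuous ζ := hζ.contDiff.continuous

lemma hasFDerivAt {ζ : V → F} (hζ : IsTestFunction S ζ) (q : V) :
    HasFDerivAt ζ (fderiv ℝ ζ q) q :=
  (hζ.contDiff.differentiable (by simp) q).hasFDerivAt

lemma fderiv_apply {ζ : V → F} (hζ : IsTestFunction S ζ) (v : V) :
    IsTestFunction S fun q => fderiv ℝ ζ q v where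
  contDiff := (hζ.contDiff.fderiv_right (m := (⊤ : ℕ∞)) (by exact_mod_cast le_top)).clm_apply
    contDiff_const
  hasCompactSupport := hζ.hasCompactSupport.fderiv_apply ℝ v
  tsupport_subset := (tsupport_fderiv_apply_subset ℝ v).trans hζ.tsupport_subset

lemma of_support_subset {G : Type*} [NormedAddCommGroup G] [NormedSpace ℝ G] {ζ : V → F}
    (hζ : IsTestFunction S ζ) {η : V → G} (hη : ContDiff ℝ (⊤ : ℕ∞) η)
    (hsupp : Function.support η ⊆ Function.support ζ) : IsTestFunction S η where
  contDiff := hη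
  hasCompactSupport := hζ.hasCompactSupport.mono hsupp
  tsupport_subset := (closure_mono hsupp).trans hζ.tsupport_subset

lemma clm_comp {G : Type*} [NormedAddCommGroup G] [NormedSpace ℝ G] {ζ : V → F}
    (hζ : IsTestFunction S ζ) (L : F →L[ℝ] G) : IsTestFunction S fun q => L (ζ q) :=
  hζ.of_support_subset (L.contDiff.comp hζ.contDiff)
    (Function.support_comp_subset (map_zero L) ζ)

lemma fderiv_clm_comp {G : Type*} [NormedAddCommGroup G] [NormedSpace ℝ G] {ζ : V → F}
    (hζ : IsTestFunction S ζ) (L : F →L[ℝ] G) (q v : V) :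
    fderiv ℝ (fun q => L (ζ q)) q v = L (fderiv ℝ ζ q v) :=
  congrArg (· v) (L.hasFDerivAt.comp q (hζ.hasFDerivAt q)).fderiv

lemma fderiv_re {ζ : V → ℂ} (hζ : IsTestFunction S ζ) (q v : V) :
    fderiv ℝ (fun q => (ζ q).re) q v = (fderiv ℝ ζ q v).re :=
  hζ.fderiv_clm_comp Complex.reCLM q v

lemma fderiv_im {ζ : V → ℂ} (hζ : IsTestFunction S ζ) (q v : V) :
    fderiv ℝ (fun q => (ζ q).im) q v = (fderiv ℝ ζ q v).im :=
  hζ.fderiv_clm_comp Complex.imCLM q v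

lemma memLp [MeasurableSpace V] [OpensMeasurableSpace V] [SecondCountableTopology V] {ζ : V → F}
    (hζ : IsTestFunction S ζ) (μ : Measure V) [IsFiniteMeasureOnCompacts μ] (p : ENNReal) :
    MemLp ζ p μ :=
  hζ.continuous.memLp_of_hasCompactSupport hζ.hasCompactSupport

end IsTestFunction

lemma contDiff_fourierChar : ContDiff ℝ (⊤ : ℕ∞) fun s : ℝ => (𝐞 s : ℂ) := by
  simp only [Real.fourierChar_apply]
  exact ((Complex.ofRealCLM.contDiff.comp (contDiff_const.mul contDiff_id)).mul
    contDiff_const).cexp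

/-- The test function `ζ` modulated by the plane wave of frequency `L`. -/
def wave (L : V →L[ℝ] ℝ) (ζ : V → ℝ) (q : V) : ℂ := ζ q * 𝐞 (L q)

lemma norm_wave (L : V →L[ℝ] ℝ) (ζ : V → ℝ) (q : V) : ‖wave L ζ q‖ = ‖ζ q‖ := by
  rw [wave, norm_mul, Circle.norm_coe, mul_one, Complex.norm_real]

lemma IsTestFunction.wave {ζ : V → ℝ} (hζ : IsTestFunction S ζ) (L : V →L[ℝ] ℝ) :
    IsTestFunction S (wave L ζ) :=
  hζ.of_support_subset
    ((Complex.ofRealCLM.contDiff.comp hζ.contDiff).mul (contDiff_fourierChar.comp L.contDiff))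
    fun q hq hζq => hq (by simp [TwoScale.wave, Function.notMem_support.1 (not_not.2 hζq)])

lemma fderiv_wave {ζ : V → ℝ} (hζ : IsTestFunction S ζ) (L : V →L[ℝ] ℝ) (q v : V) :
    fderiv ℝ (wave L ζ) q v =
      wave L (fun q => fderiv ℝ ζ q v) q + 2 * Real.pi * Complex.I * L v * wave L ζ q := by
  have hasFDerivAt_amplitude := Complex.ofRealCLM.hasFDerivAt.comp q (hζ.hasFDerivAt q)
  have hasFDerivAt_phase :=
    (Real.hasDerivAt_fourierChar (L q)).hasFDerivAt.comp q L.hasFDerivAt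
  have := (hasFDerivAt_amplitude.mul hasFDerivAt_phase).fderiv
  change fderiv ℝ ((Complex.ofRealCLM ∘ ζ) * ((fun s => (𝐞 s : ℂ)) ∘ L)) q v = _
  rw [this]
  simp [wave]
  ring

lemma integral_wave_fderiv [FiniteDimensional ℝ V] [MeasurableSpace V] [BorelSpace V]
    (μ : Measure V) [μ.IsAddHaarMeasure] {ζ : V → ℝ} (hζ : IsTestFunction S ζ) (L : V →L[ℝ] ℝ)
    (v : V) :
    ∫ q, wave L (fun q => fderiv ℝ ζ q v) q ∂μ =
      -(2 * Real.pi * Complex.I * L v * ∫ q, wave L ζ q ∂μ) := by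
  have integrable_test : ∀ {η : V → ℂ}, IsTestFunction S η → Integrable η μ := fun hη =>
    memLp_one_iff_integrable.1 (hη.memLp μ 1)
  have integral_fderiv : ∫ q, fderiv ℝ (wave L ζ) q v ∂μ = 0 := by
    have := integral_mul_fderiv_eq_neg_fderiv_mul_of_integrable (μ := μ) (f := fun _ : V => (1 : ℂ))
      (g := wave L ζ) (v := v) (by simp)
      (by simpa using integrable_test ((hζ.wave L).fderiv_apply v))
      (by simpa using integrable_test (hζ.wave L)) (fun q _ => differentiableAt_const _)
      (fun q _ => ((hζ.wave L).hasFDerivAt q).differentiableAt)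
    simpa using this
  simp only [fderiv_wave hζ] at integral_fderiv
  rw [integral_add (integrable_test ((hζ.fderiv_apply v).wave L))
    ((integrable_test (hζ.wave L)).const_mul _), integral_const_mul] at integral_fderiv
  exact eq_neg_of_add_eq_zero_left integral_fderiv

end TestFunctions

section WeakDerivatives

variable {V : Type*} [NormedAddCommGroup V] [NormedSpace ℝ V] [MeasureSpace V] {S : Set V}

lemma integral_ofReal_mul {Ω : Type*} [MeasurableSpace Ω] {μ : Measure Ω} {u : Ω → ℝ} {η : Ω → ℂ}
    (h : Integrable (fun q => (u q : ℂ) * η q) μ) :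
    ∫ q, (u q : ℂ) * η q ∂μ =
      (∫ q, u q * (η q).re ∂μ : ℝ) + (∫ q, u q * (η q).im ∂μ : ℝ) * Complex.I := by
  simpa using (integral_re_add_im h).symm

/-- `g` is the weak derivative of `u` on `S` in the direction `v`. -/
def HasWeakDerivOn (S : Set V) (v : V) (u g : V → ℝ) : Prop :=
  ∀ ζ : V → ℝ, IsTestFunction S ζ → ∫ q in S, u q * fderiv ℝ ζ q v = -∫ q in S, g q * ζ q

variable [OpensMeasurableSpace V] [SecondCountableTopology V]
  [IsFiniteMeasureOnCompacts (volume : Measure V)]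

lemma integrable_ofReal_mul_testFunction {u : V → ℝ} (hu : MemLp u 2 (volume.restrict S))
    {η : V → ℂ} (hη : IsTestFunction S η) :
    IntegrableOn (fun q => (u q : ℂ) * η q) S :=
  hu.ofReal.integrable_mul (hη.memLp _ 2)

lemma HasWeakDerivOn.setIntegral_mul_fderiv {v : V} {u g : V → ℝ} (h : HasWeakDerivOn S v u g)
    (hu : MemLp u 2 (volume.restrict S)) (hg : MemLp g 2 (volume.restrict S)) {η : V → ℂ}
    (hη : IsTestFunction S η) :
    ∫ q in S, (u q : ℂ) * fderiv ℝ η q v = -∫ q in S, (g q : ℂ) * η q := by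
  have hre := h (fun q => (η q).re) (hη.clm_comp Complex.reCLM)
  have him := h (fun q => (η q).im) (hη.clm_comp Complex.imCLM)
  simp only [hη.fderiv_re, hη.fderiv_im] at hre him
  rw [integral_ofReal_mul (integrable_ofReal_mul_testFunction hu (hη.fderiv_apply v)),
    integral_ofReal_mul (integrable_ofReal_mul_testFunction hg hη), hre, him]
  push_cast
  ring

lemma norm_setIntegral_mul_fderiv_le {v : V} {u : V → ℝ} (hu : MemLp u 2 (volume.restrict S))
    {η : V → ℂ} (hη : IsTestFunction S η) {M : ℝ}
    (hre : |∫ q in S, u q * fderiv ℝ (fun q => (η q).re) q v| ≤ M)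
    (him : |∫ q in S, u q * fderiv ℝ (fun q => (η q).im) q v| ≤ M) :
    ‖∫ q in S, (u q : ℂ) * fderiv ℝ η q v‖ ≤ M + M := by
  simp only [hη.fderiv_re, hη.fderiv_im] at hre him
  rw [integral_ofReal_mul (integrable_ofReal_mul_testFunction hu (hη.fderiv_apply v))]
  refine (norm_add_le _ _).trans (add_le_add ?_ ?_)
  · rwa [Complex.norm_real]
  · rwa [norm_mul, Complex.norm_I, mul_one, Complex.norm_real]

lemma setIntegral_mul_fderiv_wave {u : V → ℝ} (hu : MemLp u 2 (volume.restrict S)) {ζ : V → ℝ}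
    (hζ : IsTestFunction S ζ) (L : V →L[ℝ] ℝ) (v : V) :
    ∫ q in S, (u q : ℂ) * fderiv ℝ (wave L ζ) q v =
      (∫ q in S, (u q : ℂ) * wave L (fun q => fderiv ℝ ζ q v) q) +
        2 * Real.pi * Complex.I * L v * ∫ q in S, (u q : ℂ) * wave L ζ q := by
  rw [← integral_const_mul,
    ← integral_add (integrable_ofReal_mul_testFunction hu ((hζ.fderiv_apply v).wave L))
      ((integrable_ofReal_mul_testFunction hu (hζ.wave L)).const_mul _)]
  simp only [fderiv_wave hζ, mul_add, mul_left_comm]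

end WeakDerivatives

section TorusDerivatives

variable {d : Type*} [Fintype d]

lemma mFourier_toTorus_eq_fourierChar_phase (k : d → ℤ) (y : d → ℝ) :
    mFourier k (toTorus y) = 𝐞 ((phase 0 k).comp (ContinuousLinearMap.inr ℝ ℝ (d → ℝ)) y) := by
  simp [mFourier_toTorus, phase_apply]

lemma integral_fderiv_smul_mFourier [DecidableEq d] {ζ : (d → ℝ) → ℝ} (hζ : IsTestFunction univ ζ)
    (j : d) (k : d → ℤ) :
    ∫ y, fderiv ℝ ζ y (Pi.single j 1) • mFourier k (toTorus y) =
      -(2 * Real.pi * Complex.I * k j * ∫ y, ζ y • mFourier k (toTorus y)) := by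
  have := integral_wave_fderiv volume hζ
    ((phase 0 k).comp (ContinuousLinearMap.inr ℝ ℝ (d → ℝ))) (Pi.single j 1)
  simp only [wave, ← mFourier_toTorus_eq_fourierChar_phase] at this
  simpa only [ContinuousLinearMap.comp_apply, ContinuousLinearMap.inr_apply, phase_zero_single,
    Complex.ofReal_intCast, Complex.real_smul] using this

theorem hasWeakDerivOn_re_comp_toTorus [DecidableEq d] {j : d} {U : UnitAddTorus d → ℂ}
    {g : UnitAddTorus d → ℝ} (hU : MemLp U 2) (hg : MemLp g 2)
    (h : ∀ k, 2 * Real.pi * Complex.I * k j * mFourierCoeff U k =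
      mFourierCoeff (fun y => (g y : ℂ)) k) :
    HasWeakDerivOn univ (Pi.single j 1) (fun y => (U (toTorus y)).re) (fun y => g (toTorus y)) := by
  intro ζ hζ
  have hζ' := hζ.fderiv_apply (Pi.single j 1)
  have hgc : MemLp (fun y => (g y : ℂ)) 2 := hg.ofReal
  have series_U := hasSum_mFourierCoeff_mul_integral_smul_mFourier hζ'.continuous
    hζ'.hasCompactSupport hU
  have series_g := (hasSum_mFourierCoeff_mul_integral_smul_mFourier hζ.continuous
    hζ.hasCompactSupport hgc).neg
  have weak_deriv : ∫ y, fderiv ℝ ζ y (Pi.single j 1) • U (toTorus y) =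
      -∫ y, ζ y • (g (toTorus y) : ℂ) := by
    refine series_U.unique (series_g.congr_fun fun k => ?_)
    rw [integral_fderiv_smul_mFourier hζ, ← h k]
    ring
  have re_U := integral_re (integrable_smul_comp_toTorus hζ'.continuous hζ'.hasCompactSupport
    (hU.integrable one_le_two))
  have re_g := integral_re (integrable_smul_comp_toTorus hζ.continuous hζ.hasCompactSupport
    (hgc.integrable one_le_two))
  simp only [RCLike.re_to_complex, Complex.real_smul, Complex.re_ofReal_mul,
    Complex.ofReal_re] at re_U re_g weak_deriv
  simp only [setIntegral_univ, mul_comm (U _).re, mul_comm (g _), re_U, re_g, weak_deriv,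
    Complex.neg_re]

end TorusDerivatives

section ProductSpaces

variable {X Y E : Type*} [MeasurableSpace X] [MeasurableSpace Y] {μ : Measure X} [SFinite μ]
  {ν : Measure Y} [NormedAddCommGroup E] {f : X × Y → E}

lemma ae_memLp_two_prodMk [SFinite ν] (hf : MemLp f 2 (μ.prod ν)) :
    ∀ᵐ x ∂μ, MemLp (fun y => f (x, y)) 2 ν := by
  have hsq := (memLp_two_iff_integrable_sq_norm hf.aestronglyMeasurable).1 hf
  filter_upwards [hsq.prod_right_ae, hf.aestronglyMeasurable.prodMk_left] with x hx hm
  exact (memLp_two_iff_integrable_sq_norm hm).2 hx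

lemma norm_integral_sq_le [NormedSpace ℝ E] [IsFiniteMeasure ν] {g : Y → E}
    (hg : MemLp g 2 ν) : ‖∫ y, g y ∂ν‖ ^ 2 ≤ (∫ y, ‖g y‖ ^ 2 ∂ν) * ν.real univ := by
  have h := integral_norm_le_of_integral_sq_le hg.norm le_rfl
  simp only [norm_norm] at h
  calc ‖∫ y, g y ∂ν‖ ^ 2 ≤ (√(∫ y, ‖g y‖ ^ 2 ∂ν) * √(ν.real univ)) ^ 2 := by
        gcongr
        exact (norm_integral_le_integral_norm g).trans h
    _ = (∫ y, ‖g y‖ ^ 2 ∂ν) * ν.real univ := by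
        rw [mul_pow, Real.sq_sqrt (integral_nonneg fun y => by positivity),
          Real.sq_sqrt measureReal_nonneg]

lemma memLp_two_integral_prodMk [NormedSpace ℝ E] [IsFiniteMeasure ν]
    (hf : MemLp f 2 (μ.prod ν)) : MemLp (fun x => ∫ y, f (x, y) ∂ν) 2 μ := by
  have hm := hf.aestronglyMeasurable.integral_prod_right'
  have hsq := (memLp_two_iff_integrable_sq_norm hf.aestronglyMeasurable).1 hf
  rw [memLp_two_iff_integrable_sq_norm hm]
  refine (hsq.integral_prod_left.mul_const (ν.real univ)).mono' (hm.norm.pow 2) ?_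
  filter_upwards [ae_memLp_two_prodMk hf] with x hx
  rw [norm_pow, norm_norm]
  exact norm_integral_sq_le hx

end ProductSpaces

section FiberwiseFourier

variable {Ω d : Type*} [MeasurableSpace Ω] {m : Measure Ω} [Fintype d]

lemma mFourierCoeff_const_mul_mFourier (b : ℂ) (k l : d → ℤ) :
    mFourierCoeff (fun y => b * mFourier l y) k = if k = l then b else 0 := by
  simp only [mFourierCoeff, smul_eq_mul, mul_left_comm _ b, ← UnitAddTorus.mFourier_add]
  rw [integral_const_mul, integral_mFourier]
  simp only [neg_add_eq_zero, mul_ite, mul_one, mul_zero]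

lemma norm_mFourier_apply_le_one (k : d → ℤ) (y : UnitAddTorus d) : ‖mFourier k y‖ ≤ 1 :=
  ((mFourier k).norm_coe_le_norm y).trans UnitAddTorus.mFourier_norm.le

lemma memLp_mFourier_snd_mul {W : Ω × UnitAddTorus d → ℂ} (hW : MemLp W 2 (m.prod volume))
    (k : d → ℤ) : MemLp (fun p => mFourier k p.2 * W p) 2 (m.prod volume) :=
  hW.of_le (((mFourier k).continuous.measurable.comp measurable_snd).aestronglyMeasurable.mul
    hW.aestronglyMeasurable) (ae_of_all _ fun p => by
      rw [norm_mul]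
      exact mul_le_of_le_one_left (norm_nonneg _) (norm_mFourier_apply_le_one k p.2))

variable [IsFiniteMeasure m]

lemma memLp_mFourierCoeff_prodMk {W : Ω × UnitAddTorus d → ℂ} (hW : MemLp W 2 (m.prod volume))
    (k : d → ℤ) : MemLp (fun ω => mFourierCoeff (fun y => W (ω, y)) k) 2 m :=
  memLp_two_integral_prodMk (memLp_mFourier_snd_mul hW (-k))

/-- The function `(ω, y) ↦ a ω e^{2πi k·y}` as an element of `L²`. -/
def tensorMFourier {a : Ω → ℂ} (ha : MemLp a 2 m) (k : d → ℤ) :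
    Lp ℂ 2 (m.prod (volume : Measure (UnitAddTorus d))) :=
  (memLp_mFourier_snd_mul (ha.comp_fst (volume : Measure (UnitAddTorus d))) k).toLp _

lemma inner_tensorMFourier {a : Ω → ℂ} (ha : MemLp a 2 m) (k : d → ℤ)
    {W : Ω × UnitAddTorus d → ℂ} (hW : MemLp W 2 (m.prod volume)) :
    inner ℂ (tensorMFourier ha k) (hW.toLp W) =
      ∫ ω, star (a ω) * mFourierCoeff (fun y => W (ω, y)) k ∂m := by
  have ha' := memLp_mFourier_snd_mul (ha.comp_fst (volume : Measure (UnitAddTorus d))) k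
  calc inner ℂ (tensorMFourier ha k) (hW.toLp W)
      = ∫ p, star (a p.1) * (mFourier (-k) p.2 * W p) ∂m.prod volume := by
        rw [L2.inner_def]
        refine integral_congr_ae ?_
        filter_upwards [ha'.coeFn_toLp, hW.coeFn_toLp] with p hp hWp
        simp only [tensorMFourier, hp, hWp, RCLike.inner_apply, map_mul, UnitAddTorus.mFourier_neg,
          starRingEnd_apply]
        ring
    _ = ∫ ω, (∫ y, star (a ω) * (mFourier (-k) y * W (ω, y))) ∂m :=
        integral_prod _ ((ha.comp_fst (volume : Measure (UnitAddTorus d))).star.integrable_mul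
          (memLp_mFourier_snd_mul hW (-k)))
    _ = ∫ ω, star (a ω) * mFourierCoeff (fun y => W (ω, y)) k ∂m := by
        simp only [integral_const_mul, mFourierCoeff, smul_eq_mul]

lemma inner_tensorMFourier_tensorMFourier {a b : Ω → ℂ} (ha : MemLp a 2 m) (hb : MemLp b 2 m)
    (k l : d → ℤ) : inner ℂ (tensorMFourier ha k) (tensorMFourier hb l) =
      if k = l then ∫ ω, star (a ω) * b ω ∂m else 0 := by
  rw [tensorMFourier.eq_def hb, inner_tensorMFourier]
  simp only [mul_comm (mFourier l _), mFourierCoeff_const_mul_mFourier]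
  split_ifs <;> simp

lemma norm_tensorMFourier_sq {a : Ω → ℂ} (ha : MemLp a 2 m) (k : d → ℤ) :
    ‖tensorMFourier ha k‖ ^ 2 = ∫ ω, ‖a ω‖ ^ 2 ∂m := by
  have h := inner_self_eq_norm_sq_to_K (𝕜 := ℂ) (tensorMFourier ha k)
  rw [inner_tensorMFourier_tensorMFourier, if_pos rfl] at h
  simp only [Complex.star_def, Complex.conj_mul', ← Complex.ofReal_pow,
    integral_complex_ofReal] at h
  exact (Complex.ofReal_injective (h.trans (Complex.ofReal_pow _ 2).symm)).symm

lemma summable_tensorMFourier {c : (d → ℤ) → Ω → ℂ} (hc : ∀ k, MemLp (c k) 2 m)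
    (hsum : Summable fun k => ∫ ω, ‖c k ω‖ ^ 2 ∂m) :
    Summable fun k => tensorMFourier (hc k) k := by
  have orthogonal : OrthogonalFamily ℂ
      (fun k => Submodule.span ℂ {tensorMFourier (hc k) k})
      fun k => (Submodule.span ℂ {tensorMFourier (hc k) k}).subtypeₗᵢ := by
    refine OrthogonalFamily.of_pairwise fun k l hkl => Submodule.isOrtho_span.2 ?_
    rintro _ rfl _ rfl
    rw [inner_tensorMFourier_tensorMFourier, if_neg hkl]
  refine (orthogonal.summable_iff_norm_sq_summable
    fun k => ⟨tensorMFourier (hc k) k, Submodule.mem_span_singleton_self _⟩).2 ?_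
  simpa only [Submodule.coe_norm, norm_tensorMFourier_sq] using hsum

theorem exists_memLp_mFourierCoeff_eq {c : (d → ℤ) → Ω → ℂ} (hc : ∀ k, MemLp (c k) 2 m)
    (hsum : Summable fun k => ∫ ω, ‖c k ω‖ ^ 2 ∂m) :
    ∃ U : Ω × UnitAddTorus d → ℂ, MemLp U 2 (m.prod volume) ∧
      ∀ k, ∀ᵐ ω ∂m, mFourierCoeff (fun y => U (ω, y)) k = c k ω := by
  obtain ⟨W, hW⟩ := summable_tensorMFourier hc hsum
  refine ⟨W, Lp.memLp W, fun k => ?_⟩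
  refine Integrable.ae_eq_of_forall_setIntegral_eq _ _
    ((memLp_mFourierCoeff_prodMk (Lp.memLp W) k).integrable one_le_two)
    ((hc k).integrable one_le_two) fun s hs _ => ?_
  have hone : MemLp (s.indicator fun _ => (1 : ℂ)) 2 m := (memLp_const 1).indicator hs
  have star_indicator_mul : ∀ g : Ω → ℂ,
      ∫ ω, star (s.indicator (fun _ => (1 : ℂ)) ω) * g ω ∂m = ∫ ω in s, g ω ∂m := by
    intro g
    rw [← integral_indicator hs]
    congr with ω
    by_cases hω : ω ∈ s <;> simp [hω]
  have inner_W : inner ℂ (tensorMFourier hone k) W =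
      ∫ ω in s, mFourierCoeff (fun y => W (ω, y)) k ∂m := by
    conv_lhs => rw [← Lp.toLp_coeFn W (Lp.memLp W)]
    rw [inner_tensorMFourier, star_indicator_mul]
  have series := hW.mapL (innerSL ℂ (tensorMFourier hone k))
  simp only [innerSL_apply_apply, inner_tensorMFourier_tensorMFourier, star_indicator_mul,
    inner_W] at series
  rw [series.unique (hasSum_single k fun l hl => if_neg hl.symm), if_pos rfl]

lemma sum_norm_sq_mFourierCoeff_le {g : UnitAddTorus d → ℂ} (hg : MemLp g 2)
    (s : Finset (d → ℤ)) : ∑ k ∈ s, ‖mFourierCoeff g k‖ ^ 2 ≤ ∫ y, ‖g y‖ ^ 2 := by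
  have parseval := UnitAddTorus.hasSum_sq_mFourierCoeff (hg.toLp g)
  simp only [mFourierCoeff_congr_ae hg.coeFn_toLp] at parseval
  rw [integral_congr_ae (g := fun y => ‖g y‖ ^ 2)
    (hg.coeFn_toLp.mono fun y hy => by simp only [hy])] at parseval
  exact sum_le_hasSum s (fun k _ => by positivity) parseval

lemma summable_integral_norm_sq_mFourierCoeff {W : Ω × UnitAddTorus d → ℂ}
    (hW : MemLp W 2 (m.prod volume)) :
    Summable fun k => ∫ ω, ‖mFourierCoeff (fun y => W (ω, y)) k‖ ^ 2 ∂m := by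
  have hsq := (memLp_two_iff_integrable_sq_norm hW.aestronglyMeasurable).1 hW
  have hcoeff : ∀ k, Integrable (fun ω => ‖mFourierCoeff (fun y => W (ω, y)) k‖ ^ 2) m := fun k =>
    (memLp_two_iff_integrable_sq_norm (memLp_mFourierCoeff_prodMk hW k).aestronglyMeasurable).1
      (memLp_mFourierCoeff_prodMk hW k)
  refine summable_of_sum_le (c := ∫ ω, (∫ y, ‖W (ω, y)‖ ^ 2) ∂m)
    (fun k => integral_nonneg fun ω => by positivity) fun s => ?_
  rw [← integral_finsetSum _ fun k _ => hcoeff k]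
  refine integral_mono_ae (integrable_finsetSum _ fun k _ => hcoeff k) hsq.integral_prod_left ?_
  filter_upwards [ae_memLp_two_prodMk hW] with ω hω
  exact sum_norm_sq_mFourierCoeff_le hω s

end FiberwiseFourier

section Potential

variable {Ω d : Type*} [MeasurableSpace Ω] {m : Measure Ω} [Fintype d]

/-- The `k`-th Fourier coefficient of the mean-zero potential whose gradient has `k`-th Fourier
coefficient `c`. At `k = 0` the division by zero makes it `0`, the right value for mean zero. -/
def potentialCoeff (k : d → ℤ) (c : d → ℂ) : ℂ :=
  (∑ i, (k i : ℂ) * c i) / (2 * Real.pi * Complex.I * ∑ i, (k i : ℂ) ^ 2)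

lemma potentialCoeff_zero (c : d → ℂ) : potentialCoeff 0 c = 0 := by
  simp [potentialCoeff]

lemma norm_intCast_le_sum_sq (k : d → ℤ) (i : d) : ‖(k i : ℂ)‖ ≤ ∑ i, (k i : ℝ) ^ 2 := by
  calc ‖(k i : ℂ)‖ = ((|k i| : ℤ) : ℝ) := by rw [Complex.norm_intCast, Int.cast_abs]
    _ ≤ ((k i ^ 2 : ℤ) : ℝ) := by
        rw [← sq_abs]
        exact_mod_cast Int.le_self_sq _
    _ ≤ ∑ i, (k i : ℝ) ^ 2 := by
        push_cast
        exact Finset.single_le_sum (f := fun i => (k i : ℝ) ^ 2) (fun _ _ => sq_nonneg _)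
          (Finset.mem_univ i)

lemma norm_potentialCoeff_le (k : d → ℤ) (c : d → ℂ) : ‖potentialCoeff k c‖ ≤ ∑ i, ‖c i‖ := by
  have norm_numerator : ‖∑ i, (k i : ℂ) * c i‖ ≤ (∑ i, (k i : ℝ) ^ 2) * ∑ i, ‖c i‖ := by
    rw [Finset.mul_sum]
    refine norm_sum_le_of_le _ fun i _ => ?_
    rw [norm_mul]
    gcongr
    exact norm_intCast_le_sum_sq k i
  have norm_denominator : ‖2 * Real.pi * Complex.I * ∑ i, (k i : ℂ) ^ 2‖ =
      2 * Real.pi * ∑ i, (k i : ℝ) ^ 2 := by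
    have hsum : ∑ i, (k i : ℂ) ^ 2 = ((∑ i, (k i : ℝ) ^ 2 : ℝ) : ℂ) := by push_cast; rfl
    rw [hsum, norm_mul, Complex.norm_real, Real.norm_of_nonneg (by positivity)]
    simp [Real.pi_pos.le]
  rw [potentialCoeff, norm_div, norm_denominator]
  refine div_le_of_le_mul₀ (by positivity) (by positivity) (norm_numerator.trans ?_)
  rw [mul_comm]
  gcongr
  exact le_mul_of_one_le_left (by positivity) (by linarith [Real.pi_gt_three])

lemma norm_sq_potentialCoeff_le (k : d → ℤ) (c : d → ℂ) :
    ‖potentialCoeff k c‖ ^ 2 ≤ Fintype.card d * ∑ i, ‖c i‖ ^ 2 :=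
  (pow_le_pow_left₀ (norm_nonneg _) (norm_potentialCoeff_le k c) 2).trans
    (sq_sum_le_card_mul_sum_sq (s := Finset.univ) (f := fun i => ‖c i‖))

lemma two_pi_I_mul_potentialCoeff {k : d → ℤ} (hk : k ≠ 0) {c : d → ℂ} {j : d}
    (curl_free : ∀ i, (k i : ℂ) * c j = k j * c i) :
    2 * Real.pi * Complex.I * k j * potentialCoeff k c = c j := by
  obtain ⟨i, hi⟩ := Function.ne_iff.1 hk
  have hsum_ne : ∑ i, (k i : ℂ) ^ 2 ≠ 0 := by
    have hpos : 0 < ∑ i, (k i : ℝ) ^ 2 :=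
      (norm_pos_iff.2 (Int.cast_ne_zero.2 hi)).trans_le (norm_intCast_le_sum_sq k i)
    exact_mod_cast hpos.ne'
  have hsum : (k j : ℂ) * ∑ i, (k i : ℂ) * c i = (∑ i, (k i : ℂ) ^ 2) * c j := by
    rw [Finset.mul_sum, Finset.sum_mul]
    exact Finset.sum_congr rfl fun i _ => by linear_combination -(k i : ℂ) * curl_free i
  have hpi : (Real.pi : ℂ) ≠ 0 := Complex.ofReal_ne_zero.2 Real.pi_ne_zero
  rw [potentialCoeff]
  field_simp
  linear_combination hsum

lemma mFourierCoeff_zero_eq_integral (g : UnitAddTorus d → ℂ) : mFourierCoeff g 0 = ∫ y, g y := by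
  simp [mFourierCoeff, UnitAddTorus.mFourier_zero]

lemma mFourierCoeff_sub_integral {v : UnitAddTorus d → ℝ} (hv : Integrable v) (k : d → ℤ) :
    mFourierCoeff (fun y => ((v y - ∫ y, v y : ℝ) : ℂ)) k =
      if k = 0 then 0 else mFourierCoeff (fun y => (v y : ℂ)) k := by
  have hmul : Integrable fun y => mFourier (-k) y * (v y : ℂ) :=
    hv.ofReal.bdd_mul (mFourier (-k)).continuous.aestronglyMeasurable
      (ae_of_all _ (norm_mFourier_apply_le_one _))
  have hconst : Integrable fun y => mFourier (-k) y * ((∫ y, v y : ℝ) : ℂ) :=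
    ((mFourier (-k)).continuous.integrable_of_hasCompactSupport
      (HasCompactSupport.of_compactSpace _)).mul_const _
  simp only [mFourierCoeff, smul_eq_mul, Complex.ofReal_sub, mul_sub]
  rw [integral_sub hmul hconst, integral_mul_const, integral_mFourier]
  split_ifs with h0 hk hk
  · simp [hk, UnitAddTorus.mFourier_zero, integral_complex_ofReal]
  · exact absurd (neg_eq_zero.1 h0) hk
  · exact absurd (neg_eq_zero.2 hk) h0
  · simp

lemma integral_re_eq_zero_of_mFourierCoeff_eq_potentialCoeff {U : UnitAddTorus d → ℂ}
    (hU : Integrable U) {c : d → ℂ} (hU0 : mFourierCoeff U 0 = potentialCoeff 0 c) :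
    ∫ y, (U y).re = 0 := by
  rw [potentialCoeff_zero, mFourierCoeff_zero_eq_integral] at hU0
  have h := integral_re hU
  simp only [RCLike.re_to_complex] at h
  rw [h, hU0, Complex.zero_re]

lemma hasWeakDerivOn_re_of_mFourierCoeff_eq_potentialCoeff [DecidableEq d]
    {v : d → UnitAddTorus d → ℝ} (hv : ∀ j, MemLp (v j) 2) {U : UnitAddTorus d → ℂ}
    (hU : MemLp U 2)
    (hcoeff : ∀ k, mFourierCoeff U k =
      potentialCoeff k fun i => mFourierCoeff (fun y => (v i y : ℂ)) k)
    (curl_free : ∀ k i j, (k i : ℂ) * mFourierCoeff (fun y => (v j y : ℂ)) k =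
      k j * mFourierCoeff (fun y => (v i y : ℂ)) k) (j : d) :
    HasWeakDerivOn univ (Pi.single j 1) (fun y => (U (toTorus y)).re)
      fun y => v j (toTorus y) - ∫ y, v j y := by
  refine hasWeakDerivOn_re_comp_toTorus (g := fun y => v j y - ∫ y, v j y) hU
    ((hv j).sub (memLp_const _)) fun k => ?_
  rw [hcoeff, mFourierCoeff_sub_integral ((hv j).integrable one_le_two)]
  split_ifs with hk
  · rw [hk, potentialCoeff_zero, mul_zero]
  · exact two_pi_I_mul_potentialCoeff hk fun i => curl_free k i j

variable [IsFiniteMeasure m] {V : d → Ω × UnitAddTorus d → ℝ}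

lemma exists_memLp_mFourierCoeff_eq_potentialCoeff (hV : ∀ j, MemLp (V j) 2 (m.prod volume)) :
    ∃ U : Ω × UnitAddTorus d → ℂ, MemLp U 2 (m.prod volume) ∧
      ∀ k, ∀ᵐ ω ∂m, mFourierCoeff (fun y => U (ω, y)) k =
        potentialCoeff k fun i => mFourierCoeff (fun y => (V i (ω, y) : ℂ)) k := by
  have hVc : ∀ i, MemLp (fun p => (V i p : ℂ)) 2 (m.prod volume) := fun i => (hV i).ofReal
  have hcoeff : ∀ k, MemLp (fun ω => potentialCoeff k fun i =>
      mFourierCoeff (fun y => (V i (ω, y) : ℂ)) k) 2 m := fun k => by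
    simp only [potentialCoeff, div_eq_mul_inv]
    exact (memLp_finsetSum _ fun i _ =>
      (memLp_mFourierCoeff_prodMk (hVc i) k).const_mul (k i : ℂ)).mul_const _
  have hsq : ∀ i k, Integrable
      (fun ω => ‖mFourierCoeff (fun y => (V i (ω, y) : ℂ)) k‖ ^ 2) m := fun i k =>
    (memLp_mFourierCoeff_prodMk (hVc i) k).integrable_norm_pow two_ne_zero
  refine exists_memLp_mFourierCoeff_eq hcoeff (Summable.of_nonneg_of_le
    (fun k => integral_nonneg fun ω => by positivity) (fun k => ?_)
    ((summable_sum (s := Finset.univ) fun i _ =>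
      summable_integral_norm_sq_mFourierCoeff (hVc i)).mul_left
      (Fintype.card d : ℝ)))
  rw [← integral_finsetSum _ fun i _ => hsq i k, ← integral_const_mul]
  exact integral_mono ((hcoeff k).integrable_norm_pow two_ne_zero)
    ((integrable_finsetSum _ fun i _ => hsq i k).const_mul _)
    fun ω => norm_sq_potentialCoeff_le k _

theorem exists_periodic_potential [DecidableEq d] (hV : ∀ j, MemLp (V j) 2 (m.prod volume))
    (curl_free : ∀ k i j, ∀ᵐ ω ∂m, (k i : ℂ) * mFourierCoeff (fun y => (V j (ω, y) : ℂ)) k =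
      k j * mFourierCoeff (fun y => (V i (ω, y) : ℂ)) k) :
    ∃ (u : Ω × UnitAddTorus d → ℝ) (D : d → Ω × UnitAddTorus d → ℝ),
      MemLp u 2 (m.prod volume) ∧ (∀ j, MemLp (D j) 2 (m.prod volume)) ∧
      (∀ ω, Integrable (fun y => u (ω, y)) ∧ ∫ y, u (ω, y) = 0) ∧
      (∀ ω j, HasWeakDerivOn univ (Pi.single j 1) (fun y => u (ω, toTorus y))
        fun y => D j (ω, toTorus y)) ∧
      ∀ j, D j =ᵐ[m.prod volume] fun p => V j p - ∫ y, V j (p.1, y) := by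
  obtain ⟨U, hU, hU_coeff⟩ := exists_memLp_mFourierCoeff_eq_potentialCoeff hV
  have good := (ae_all_iff.2 hU_coeff).and <| (ae_memLp_two_prodMk hU).and <|
    (ae_all_iff.2 fun j => ae_memLp_two_prodMk (hV j)).and <|
    ae_all_iff.2 fun k => ae_all_iff.2 fun i => ae_all_iff.2 fun j => curl_free k i j
  obtain ⟨s, hs, hs_meas, hs_good⟩ := good.exists_measurable_mem
  have hs_prod : MeasurableSet (s ×ˢ (univ : Set (UnitAddTorus d))) := hs_meas.prod .univ
  have mean : ∀ j, MemLp (fun p : Ω × UnitAddTorus d => ∫ y, V j (p.1, y)) 2 (m.prod volume) :=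
    fun j => (memLp_two_integral_prodMk (hV j)).comp_fst (volume : Measure (UnitAddTorus d))
  refine ⟨(s ×ˢ univ).indicator fun p => (U p).re,
    fun j => (s ×ˢ univ).indicator fun p => V j p - ∫ y, V j (p.1, y),
    hU.re.indicator hs_prod, fun j => ((hV j).sub (mean j)).indicator hs_prod,
    fun ω => ?_, fun ω j => ?_, fun j => ?_⟩
  · by_cases hω : ω ∈ s
    · obtain ⟨hcoeff, hUω, -⟩ := hs_good ω hω
      have hUω_int := hUω.integrable one_le_two
      simpa [indicator, hω] using And.intro hUω_int.re
        (integral_re_eq_zero_of_mFourierCoeff_eq_potentialCoeff hUω_int (hcoeff 0))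
    · simp [indicator, hω]
  · by_cases hω : ω ∈ s
    · obtain ⟨hcoeff, hUω, hVω, hcurl⟩ := hs_good ω hω
      simpa [indicator, hω] using
        hasWeakDerivOn_re_of_mFourierCoeff_eq_potentialCoeff hVω hUω hcoeff hcurl j
    · simp [indicator, hω, HasWeakDerivOn]
  · filter_upwards [Measure.quasiMeasurePreserving_fst.ae hs] with p (hp : p.1 ∈ s)
    simp only [indicator, mem_prod, hp, mem_univ, and_self, if_true]

end Potential

section FourierUniqueness

variable {B d : Type*} [MetricSpace B] [CompactSpace B] [MeasurableSpace B] [BorelSpace B]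
  [Fintype d] {ν : Measure B} [IsFiniteMeasure ν]

lemma integrable_mul_continuousMap {K 𝕜 : Type*} [RCLike 𝕜] [TopologicalSpace K] [CompactSpace K]
    [MeasurableSpace K] [BorelSpace K] {m : Measure K} {g : K → 𝕜} (hg : Integrable g m)
    (Ψ : C(K, 𝕜)) : Integrable (fun p => g p * Ψ p) m :=
  integrable_mul_continuousMap_comp measurable_id hg Ψ

lemma ae_eq_zero_of_forall_integral_mul_fourier_eq_zero {h : UnitAddCircle → ℂ}
    (hh : MemLp h 2) (h₀ : ∀ k : ℤ, ∫ s, h s * fourier k s = 0) : h =ᵐ[volume] 0 := by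
  suffices hh.toLp h = 0 from hh.coeFn_toLp.symm.trans ((Lp.eq_zero_iff_ae_eq_zero).1 this)
  have coeff_eq_zero : ∀ k, fourierCoeff (hh.toLp h) k = 0 := fun k => by
    rw [fourierCoeff, ← h₀ (-k)]
    refine integral_congr_ae (hh.coeFn_toLp.mono fun s hs => ?_)
    simp only [hs, smul_eq_mul, mul_comm]
  refine (hasSum_fourier_series_L2 (hh.toLp h)).unique (hasSum_zero.congr_fun fun k => ?_)
  rw [coeff_eq_zero, zero_smul]

lemma ae_integral_prodMk_eq_zero_of_forall_integral_mul_fourier_eq_zero {Φ : B × UnitAddCircle → ℝ}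
    (hΦ : MemLp Φ 2 (ν.prod volume))
    (h : ∀ k : ℤ, ∫ z, (Φ z : ℂ) * fourier k z.2 ∂ν.prod volume = 0) :
    ∀ᵐ s, ∫ b, Φ (b, s) ∂ν = 0 := by
  have memLp_swap : MemLp (fun p : UnitAddCircle × B => (Φ p.swap : ℂ)) 2 (volume.prod ν) :=
    (hΦ.comp_measurePreserving Measure.measurePreserving_swap).ofReal
  have fiber_integral := ae_eq_zero_of_forall_integral_mul_fourier_eq_zero
    (memLp_two_integral_prodMk memLp_swap) fun k => by
      refine Eq.trans ?_ ((integral_prod_symm _ (integrable_mul_continuousMap_comp measurable_snd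
        (hΦ.ofReal.integrable one_le_two) (fourier k))).symm.trans (h k))
      simp only [integral_mul_const, Prod.swap_prod_mk, Complex.coe_algebraMap]
  filter_upwards [fiber_integral] with s hs
  simpa [integral_complex_ofReal] using hs

lemma integral_mul_twoScaleChar {G : TwoScaleSpace B d → ℂ}
    (hG : Integrable G ((ν.prod volume).prod volume)) (f : C(B, ℂ)) (k₀ : ℤ) (k : d → ℤ) :
    ∫ p, G p * twoScaleChar f k₀ k p ∂(ν.prod volume).prod volume =
      ∫ z, mFourierCoeff (fun y => G (z, y)) (-k) * (f z.1 * fourier k₀ z.2) ∂ν.prod volume := by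
  rw [integral_prod _ (integrable_mul_continuousMap hG _)]
  refine integral_congr_ae (ae_of_all _ fun z => ?_)
  simp only [mFourierCoeff, neg_neg, ← integral_mul_const, twoScaleChar_apply, smul_eq_mul]
  exact integral_congr_ae (ae_of_all _ fun y => by ring)

lemma integral_comp_fst_mul_twoScaleChar (H : B × UnitAddCircle → ℂ) (f : C(B, ℂ)) (k₀ : ℤ)
    (k : d → ℤ) :
    ∫ p, H p.1 * twoScaleChar f k₀ k p ∂(ν.prod volume).prod volume =
      if k = 0 then ∫ z, H z * (f z.1 * fourier k₀ z.2) ∂ν.prod volume else 0 := by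
  simp only [twoScaleChar_apply, ← mul_assoc]
  rw [integral_prod_mul (fun z : B × UnitAddCircle => H z * f z.1 * fourier k₀ z.2)
    (fun y => mFourier k y), integral_mFourier, mul_ite, mul_one, mul_zero]

lemma integral_integral_prodMk_mul_fourier {W : B × UnitAddCircle → ℂ}
    (hW : Integrable W (ν.prod volume)) (f : C(B, ℂ)) (k₀ : ℤ) :
    ∫ z : B × UnitAddCircle, (∫ s, W (z.1, s)) * (f z.1 * fourier k₀ z.2) ∂ν.prod volume =
      if k₀ = 0 then ∫ z, W z * f z.1 ∂ν.prod volume else 0 := by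
  simp only [← mul_assoc]
  rw [integral_prod_mul (fun b : B => (∫ s : UnitAddCircle, W (b, s)) * f b)
    (fun s : UnitAddCircle => fourier k₀ s),
    integral_fourier, integral_prod _ (integrable_mul_continuousMap_comp measurable_fst hW f),
    mul_ite, mul_one, mul_zero]
  simp only [integral_mul_const]

lemma ae_eq_zero_of_forall_integral_mul_mul_fourier_eq_zero {H : B × UnitAddCircle → ℂ}
    (hH : MemLp H 2 (ν.prod volume))
    (h : ∀ (f : C(B, ℂ)) k₀, ∫ z, H z * (f z.1 * fourier k₀ z.2) ∂ν.prod volume = 0) :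
    H =ᵐ[ν.prod volume] 0 := by
  have := ae_eq_zero_of_forall_integral_mul_twoScaleChar_eq_zero
    (hH.comp_fst (volume : Measure (UnitAddTorus Empty))) fun f k₀ k => by
      rw [integral_comp_fst_mul_twoScaleChar, h, ite_self]
  exact (Measure.ae_ae_of_ae_prod this).mono fun z hz => hz.exists.choose_spec

theorem ae_eq_integral_snd_of_integral_mul_twoScaleChar_eq_zero {G : TwoScaleSpace B d → ℂ}
    (hG : MemLp G 2 ((ν.prod volume).prod volume))
    (h : ∀ f k₀, ∀ k ≠ 0, ∫ p, G p * twoScaleChar f k₀ k p ∂(ν.prod volume).prod volume = 0) :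
    G =ᵐ[(ν.prod volume).prod volume] fun p => ∫ y, G (p.1, y) := by
  have memLp_mean := (memLp_two_integral_prodMk hG).comp_fst (volume : Measure (UnitAddTorus d))
  refine (sub_ae_eq_zero _ _).1 (ae_eq_zero_of_forall_integral_mul_twoScaleChar_eq_zero
    (hG.sub memLp_mean) fun f k₀ k => ?_)
  simp only [Pi.sub_apply, sub_mul]
  rw [integral_sub (integrable_mul_continuousMap (hG.integrable one_le_two) _)
    (integrable_mul_continuousMap (memLp_mean.integrable one_le_two) _),
    integral_comp_fst_mul_twoScaleChar fun z => ∫ y, G (z, y)]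
  split_ifs with hk
  · rw [integral_mul_twoScaleChar (hG.integrable one_le_two), hk, neg_zero]
    simp only [mFourierCoeff_zero_eq_integral, sub_self]
  · rw [h f k₀ k hk, sub_zero]

theorem ae_mFourierCoeff_eq_zero_of_integral_mul_twoScaleChar_eq_zero {G : TwoScaleSpace B d → ℂ}
    (hG : MemLp G 2 ((ν.prod volume).prod volume)) {k : d → ℤ}
    (h : ∀ f k₀, ∫ p, G p * twoScaleChar f k₀ (-k) p ∂(ν.prod volume).prod volume = 0) :
    ∀ᵐ z ∂ν.prod volume, mFourierCoeff (fun y => G (z, y)) k = 0 :=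
  ae_eq_zero_of_forall_integral_mul_mul_fourier_eq_zero (memLp_mFourierCoeff_prodMk hG k)
    fun f k₀ => by
      rw [← h f k₀, integral_mul_twoScaleChar (hG.integrable one_le_two), neg_neg]

theorem ae_eq_integral_snd_of_integral_mul_fourier_eq_zero {W : B × UnitAddCircle → ℂ}
    (hW : MemLp W 2 (ν.prod volume))
    (h : ∀ (f : C(B, ℂ)), ∀ k₀ ≠ 0, ∫ z, W z * (f z.1 * fourier k₀ z.2) ∂ν.prod volume = 0) :
    W =ᵐ[ν.prod volume] fun z => ∫ s, W (z.1, s) := by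
  have memLp_mean := (memLp_two_integral_prodMk hW).comp_fst (volume : Measure UnitAddCircle)
  refine (sub_ae_eq_zero _ _).1 (ae_eq_zero_of_forall_integral_mul_mul_fourier_eq_zero
    (hW.sub memLp_mean) fun f k₀ => ?_)
  let Ψ : C(B × UnitAddCircle, ℂ) := ⟨fun z => f z.1 * fourier k₀ z.2, by fun_prop⟩
  simp only [Pi.sub_apply, sub_mul]
  refine (integral_sub (integrable_mul_continuousMap (hW.integrable one_le_two) Ψ)
    (integrable_mul_continuousMap (memLp_mean.integrable one_le_two) Ψ)).trans
    (sub_eq_zero.2 (Eq.trans ?_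
      (integral_integral_prodMk_mul_fourier (hW.integrable one_le_two) f k₀).symm))
  split_ifs with hk₀
  · simp [Ψ, hk₀]
  · exact h f k₀ hk₀

end FourierUniqueness

section Localization

variable {X B d : Type*} [MetricSpace B]

/-- The real function `ζ` read on the space `B` through `ι`, as a complex amplitude. -/
def pullback [TopologicalSpace X] (ι : C(B, X)) {ζ : X → ℝ} (hζ : Continuous ζ) : C(B, ℂ) where
  toFun b := ζ (ι b)
  continuous_toFun := by fun_prop

lemma pullback_apply [TopologicalSpace X] (ι : C(B, X)) {ζ : X → ℝ} (hζ : Continuous ζ) (b : B) :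
    pullback ι hζ b = ζ (ι b) := rfl

variable [MeasurableSpace B] [BorelSpace B]

lemma ae_comp_eq_zero_of_forall_integral_mul_pullback_eq_zero [NormedAddCommGroup X]
    [NormedSpace ℝ X] [FiniteDimensional ℝ X] [MeasurableSpace X] [BorelSpace X] {μ : Measure X}
    {S : Set X} (hS : IsOpen S) {r : C(X, B)} {ι : C(B, X)} (hι : ∀ q ∈ S, ι (r q) = q)
    {c : B → ℂ} (hc : Integrable c ((μ.restrict S).map r))
    (h : ∀ (ζ : X → ℝ) (hζ : IsTestFunction S ζ),
      ∫ b, c b * pullback ι hζ.continuous b ∂(μ.restrict S).map r = 0) :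
    ∀ᵐ q ∂μ.restrict S, c (r q) = 0 := by
  have hr : AEMeasurable r (μ.restrict S) := r.continuous.aemeasurable
  refine (ae_restrict_iff' hS.measurableSet).2 <|
    hS.ae_eq_zero_of_integral_contDiff_smul_eq_zero
      (IntegrableOn.locallyIntegrableOn (hc.comp_aemeasurable hr)) fun ζ hζ hζ' hζS => ?_
  have hζ_test : IsTestFunction S ζ := ⟨hζ, hζ', hζS⟩
  rw [← setIntegral_eq_integral_of_forall_compl_eq_zero (s := S) fun q hq => by
    simp [image_eq_zero_of_notMem_tsupport fun h => hq (hζS h)]]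
  refine Eq.trans (setIntegral_congr_fun hS.measurableSet fun q hq => ?_)
    ((integral_map hr (hc.aestronglyMeasurable.mul
      (pullback ι hζ_test.continuous).continuous.aestronglyMeasurable)).symm.trans (h ζ hζ_test))
  simp [pullback_apply, hι q hq, mul_comm]

theorem integral_mul_twoScaleChar_eq_zero_of_forall_pullback [CompactSpace B] [Fintype d]
    {S : Set (ℝ × (d → ℝ))} [IsFiniteMeasure (volume.restrict S)] (hS : IsOpen S)
    {r : C(ℝ × (d → ℝ), B)}
    {ι : C(B, ℝ × (d → ℝ))} (hι : ∀ q ∈ S, ι (r q) = q) {G : TwoScaleSpace B d → ℂ}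
    (hG : MemLp G 2 (twoScaleMeasure (volume.restrict S) r)) {k₀ : ℤ} {k : d → ℤ}
    (h : ∀ (ζ : ℝ × (d → ℝ) → ℝ) (hζ : IsTestFunction S ζ),
      ∫ p, G p * twoScaleChar (pullback ι hζ.continuous) k₀ k p
        ∂twoScaleMeasure (volume.restrict S) r = 0) (f : C(B, ℂ)) :
    ∫ p, G p * twoScaleChar f k₀ k p ∂twoScaleMeasure (volume.restrict S) r = 0 := by
  have integrable_coeff : Integrable (fun z : B × UnitAddCircle =>
      mFourierCoeff (fun y => G (z, y)) (-k) * fourier k₀ z.2)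
      (((volume.restrict S).map r).prod volume) :=
    integrable_mul_continuousMap_comp measurable_snd
      ((memLp_mFourierCoeff_prodMk hG (-k)).integrable one_le_two) (fourier k₀)
  let c : B → ℂ := fun b => ∫ s, mFourierCoeff (fun y => G ((b, s), y)) (-k) * fourier k₀ s
  have integral_eq : ∀ f : C(B, ℂ), ∫ p, G p * twoScaleChar f k₀ k p
      ∂twoScaleMeasure (volume.restrict S) r = ∫ b, c b * f b ∂(volume.restrict S).map r := by
    intro f
    rw [integral_mul_twoScaleChar (hG.integrable one_le_two)]
    simp only [mul_comm (f _), ← mul_assoc]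
    rw [integral_prod _ (integrable_mul_continuousMap_comp measurable_fst integrable_coeff f)]
    simp only [integral_mul_const, c]
  have hc : Integrable c ((volume.restrict S).map r) := integrable_coeff.integral_prod_left
  have c_eq_zero := ae_comp_eq_zero_of_forall_integral_mul_pullback_eq_zero hS hι hc
    fun ζ hζ => by rw [← integral_eq, h ζ hζ]
  rw [integral_eq]
  refine (integral_map r.continuous.aemeasurable
    (hc.aestronglyMeasurable.mul f.continuous.aestronglyMeasurable)).trans ?_
  exact integral_eq_zero_of_ae (c_eq_zero.mono fun q hq => by simp [hq])

end Localization

section OscillatingTests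

variable {K Ω : Type*} [MeasurableSpace Ω] {μ : Measure Ω} [TopologicalSpace K] [CompactSpace K]
  [MeasurableSpace K] [BorelSpace K] {m : Measure K} {ρ : ℕ → Ω → K}

lemma TendstoAlong.tendsto_integral_ofReal_mul {u : ℕ → Ω → ℝ} {V : K → ℝ}
    (h : TendstoAlong μ ρ m u V) (hρ : ∀ n, Measurable (ρ n)) (hu : ∀ n, Integrable (u n) μ)
    (hV : Integrable V m) (Ψ : C(K, ℂ)) :
    Tendsto (fun n => ∫ q, (u n q : ℂ) * Ψ (ρ n q) ∂μ) atTop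
      (nhds (∫ p, (V p : ℂ) * Ψ p ∂m)) := by
  have split_u := fun n => integral_ofReal_mul (u := u n)
    (integrable_mul_continuousMap_comp (hρ n) (hu n).ofReal Ψ)
  have split_V := integral_ofReal_mul (u := V) (integrable_mul_continuousMap hV.ofReal Ψ)
  have tendsto_re := h ⟨fun p => (Ψ p).re, by fun_prop⟩
  have tendsto_im := h ⟨fun p => (Ψ p).im, by fun_prop⟩
  rw [split_V]
  exact (tendsto_re.ofReal.add (tendsto_im.ofReal.mul_const Complex.I)).congr fun n =>
    (split_u n).symm

lemma eq_zero_of_tendsto_of_norm_add_inv_mul_le {a b : ℕ → ℂ} {a₀ b₀ c : ℂ} {ε : ℕ → ℝ} {M : ℝ}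
    (ha : Tendsto a atTop (nhds a₀)) (hb : Tendsto b atTop (nhds b₀)) (hε : ∀ n, ε n ≠ 0)
    (hε₀ : Tendsto ε atTop (nhds 0)) (hc : c ≠ 0)
    (h : ∀ n, ‖b n + c * (ε n)⁻¹ * a n‖ ≤ M) : a₀ = 0 := by
  have hε₀' : Tendsto (fun n => (ε n : ℂ)) atTop (nhds 0) := by
    simpa using hε₀.ofReal
  have scaled_tendsto_zero : Tendsto (fun n => (ε n : ℂ) * (b n + c * (ε n)⁻¹ * a n)) atTop
      (nhds 0) :=
    hε₀'.zero_mul_isBoundedUnder_le (isBoundedUnder_of ⟨M, h⟩)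
  have scaled_tendsto : Tendsto (fun n => (ε n : ℂ) * (b n + c * (ε n)⁻¹ * a n)) atTop
      (nhds (0 * b₀ + c * a₀)) := by
    refine ((hε₀'.mul hb).add (ha.const_mul c)).congr fun n => ?_
    have : (ε n : ℂ) ≠ 0 := by exact_mod_cast hε n
    push_cast
    field_simp
  simpa [hc] using tendsto_nhds_unique scaled_tendsto scaled_tendsto_zero

end OscillatingTests

section Identification

variable {B d : Type*} [MetricSpace B] [Fintype d] {S : Set (ℝ × (d → ℝ))}
  {r : C(ℝ × (d → ℝ), B)} {ι : C(B, ℝ × (d → ℝ))} {ε : ℕ → ℝ}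

lemma twoScaleChar_pullback_twoScaleMap (hι : ∀ q ∈ S, ι (r q) = q) {ζ : ℝ × (d → ℝ) → ℝ}
    (hζ : Continuous ζ) (e : ℝ) (k₀ : ℤ) (k : d → ℤ) {q : ℝ × (d → ℝ)} (hq : q ∈ S) :
    twoScaleChar (pullback ι hζ) k₀ k (twoScaleMap r e q) = wave (e⁻¹ • phase k₀ k) ζ q := by
  rw [twoScaleChar_twoScaleMap, pullback_apply, hι q hq, wave]
  simp [div_eq_inv_mul]

lemma HasWeakDerivOn.setIntegral_mul_wave_fderiv [DecidableEq d] {j : d} {u g : ℝ × (d → ℝ) → ℝ}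
    (h : HasWeakDerivOn S (0, Pi.single j 1) u g) (hu : MemLp u 2 (volume.restrict S))
    (hg : MemLp g 2 (volume.restrict S)) {ζ : ℝ × (d → ℝ) → ℝ} (hζ : IsTestFunction S ζ) (e : ℝ)
    (k₀ : ℤ) (k : d → ℤ) :
    (∫ q in S, (u q : ℂ) *
        wave (e⁻¹ • phase k₀ k) (fun q => fderiv ℝ ζ q (0, Pi.single j 1)) q) +
      2 * Real.pi * Complex.I * e⁻¹ * k j * ∫ q in S, (u q : ℂ) * wave (e⁻¹ • phase k₀ k) ζ q =
      -∫ q in S, (g q : ℂ) * wave (e⁻¹ • phase k₀ k) ζ q := by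
  rw [← h.setIntegral_mul_fderiv hu hg (hζ.wave _), setIntegral_mul_fderiv_wave hu hζ]
  simp [phase_zero_single, mul_assoc]

variable [CompactSpace B] [MeasurableSpace B] [BorelSpace B] [IsFiniteMeasure (volume.restrict S)]
  {u : ℕ → ℝ × (d → ℝ) → ℝ} {U : TwoScaleSpace B d → ℝ}

lemma tendsto_setIntegral_mul_wave (hS : MeasurableSet S) (hι : ∀ q ∈ S, ι (r q) = q)
    (hu : ∀ n, MemLp (u n) 2 (volume.restrict S))
    (hU : MemLp U 2 (twoScaleMeasure (volume.restrict S) r))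
    (h : TendstoAlong (volume.restrict S) (fun n => twoScaleMap r (ε n))
      (twoScaleMeasure (volume.restrict S) r) u U)
    {ζ : ℝ × (d → ℝ) → ℝ} (hζ : Continuous ζ) (k₀ : ℤ) (k : d → ℤ) :
    Tendsto (fun n => ∫ q in S, (u n q : ℂ) * wave ((ε n)⁻¹ • phase k₀ k) ζ q) atTop
      (nhds (∫ p, (U p : ℂ) * twoScaleChar (pullback ι hζ) k₀ k p
        ∂twoScaleMeasure (volume.restrict S) r)) := by
  refine (h.tendsto_integral_ofReal_mul (fun n => (twoScaleMap r (ε n)).continuous.measurable)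
    (fun n => (hu n).integrable one_le_two) (hU.integrable one_le_two)
    (twoScaleChar (pullback ι hζ) k₀ k)).congr fun n => ?_
  exact setIntegral_congr_fun hS fun q hq => by
    simp only [twoScaleChar_pullback_twoScaleMap hι hζ (ε n) k₀ k hq]

lemma integral_mul_twoScaleChar_eq_zero_of_norm_setIntegral_fderiv_wave_le (hS : MeasurableSet S)
    (hι : ∀ q ∈ S, ι (r q) = q) (hε : ∀ n, ε n ≠ 0) (hε₀ : Tendsto ε atTop (nhds 0))
    (hu : ∀ n, MemLp (u n) 2 (volume.restrict S))
    (hU : MemLp U 2 (twoScaleMeasure (volume.restrict S) r))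
    (h : TendstoAlong (volume.restrict S) (fun n => twoScaleMap r (ε n))
      (twoScaleMeasure (volume.restrict S) r) u U)
    {ζ : ℝ × (d → ℝ) → ℝ} (hζ : IsTestFunction S ζ) {k₀ : ℤ} {k : d → ℤ} {v : ℝ × (d → ℝ)}
    (hv : phase k₀ k v ≠ 0) {M : ℝ}
    (hM : ∀ n, ‖∫ q in S, (u n q : ℂ) * fderiv ℝ (wave ((ε n)⁻¹ • phase k₀ k) ζ) q v‖ ≤ M) :
    ∫ p, (U p : ℂ) * twoScaleChar (pullback ι hζ.continuous) k₀ k p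
      ∂twoScaleMeasure (volume.restrict S) r = 0 := by
  refine eq_zero_of_tendsto_of_norm_add_inv_mul_le (M := M)
    (c := 2 * Real.pi * Complex.I * phase k₀ k v)
    (tendsto_setIntegral_mul_wave hS hι hu hU h hζ.continuous k₀ k)
    (tendsto_setIntegral_mul_wave hS hι hu hU h (hζ.fderiv_apply v).continuous k₀ k) hε hε₀
    (by simp [Real.pi_ne_zero, hv]) fun n => ?_
  convert hM n using 2
  rw [setIntegral_mul_fderiv_wave (hu n) hζ]
  simp only [smul_apply, smul_eq_mul, Complex.ofReal_mul]
  ring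

variable [DecidableEq d] {g : d → ℕ → ℝ × (d → ℝ) → ℝ} {V : d → TwoScaleSpace B d → ℝ}

/-- The functions `u n` on `S`, with weak spatial gradients `g · n`, are bounded in `L²` together
with their gradients, and two-scale converge to `U`, their gradients to `V`. -/
structure GradientLimit (S : Set (ℝ × (d → ℝ))) (r : C(ℝ × (d → ℝ), B)) (ε : ℕ → ℝ)
    (u : ℕ → ℝ × (d → ℝ) → ℝ) (g : d → ℕ → ℝ × (d → ℝ) → ℝ) (U : TwoScaleSpace B d → ℝ)
    (V : d → TwoScaleSpace B d → ℝ) : Prop where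
  memLp : ∀ n, MemLp (u n) 2 (volume.restrict S)
  memLp_grad : ∀ j n, MemLp (g j n) 2 (volume.restrict S)
  hasWeakDerivOn : ∀ j n, HasWeakDerivOn S (0, Pi.single j 1) (u n) (g j n)
  bounded : ∃ C, ∀ n, ∫ q in S, u n q ^ 2 ≤ C
  bounded_grad : ∃ C, ∀ j n, ∫ q in S, g j n q ^ 2 ≤ C
  memLp_limit : MemLp U 2 (twoScaleMeasure (volume.restrict S) r)
  memLp_limit_grad : ∀ j, MemLp (V j) 2 (twoScaleMeasure (volume.restrict S) r)
  tendsto : TendstoAlong (volume.restrict S) (fun n => twoScaleMap r (ε n))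
    (twoScaleMeasure (volume.restrict S) r) u U
  tendsto_grad : ∀ j, TendstoAlong (volume.restrict S) (fun n => twoScaleMap r (ε n))
    (twoScaleMeasure (volume.restrict S) r) (g j) (V j)

namespace GradientLimit

lemma tendsto_wave (h : GradientLimit S r ε u g U V) (hS : MeasurableSet S)
    (hι : ∀ q ∈ S, ι (r q) = q) {ζ : ℝ × (d → ℝ) → ℝ} (hζ : Continuous ζ) (k₀ : ℤ) (k : d → ℤ) :
    Tendsto (fun n => ∫ q in S, (u n q : ℂ) * wave ((ε n)⁻¹ • phase k₀ k) ζ q) atTop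
      (nhds (∫ p, (U p : ℂ) * twoScaleChar (pullback ι hζ) k₀ k p
        ∂twoScaleMeasure (volume.restrict S) r)) :=
  tendsto_setIntegral_mul_wave hS hι h.memLp h.memLp_limit h.tendsto hζ k₀ k

lemma tendsto_grad_wave (h : GradientLimit S r ε u g U V) (hS : MeasurableSet S)
    (hι : ∀ q ∈ S, ι (r q) = q) (j : d) {ζ : ℝ × (d → ℝ) → ℝ} (hζ : Continuous ζ) (k₀ : ℤ)
    (k : d → ℤ) :
    Tendsto (fun n => ∫ q in S, (g j n q : ℂ) * wave ((ε n)⁻¹ • phase k₀ k) ζ q) atTop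
      (nhds (∫ p, (V j p : ℂ) * twoScaleChar (pullback ι hζ) k₀ k p
        ∂twoScaleMeasure (volume.restrict S) r)) :=
  tendsto_setIntegral_mul_wave hS hι (h.memLp_grad j) (h.memLp_limit_grad j) (h.tendsto_grad j) hζ
    k₀ k

lemma integral_mul_twoScaleChar_pullback_eq_zero (h : GradientLimit S r ε u g U V)
    (hS : MeasurableSet S) (hι : ∀ q ∈ S, ι (r q) = q) (hε : ∀ n, ε n ≠ 0)
    (hε₀ : Tendsto ε atTop (nhds 0)) (k₀ : ℤ) {k : d → ℤ} (hk : k ≠ 0) {ζ : ℝ × (d → ℝ) → ℝ}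
    (hζ : IsTestFunction S ζ) :
    ∫ p, (U p : ℂ) * twoScaleChar (pullback ι hζ.continuous) k₀ k p
      ∂twoScaleMeasure (volume.restrict S) r = 0 := by
  obtain ⟨j, hj⟩ := Function.ne_iff.1 hk
  obtain ⟨M, hM⟩ := (h.tendsto_grad_wave hS hι j hζ.continuous k₀ k).norm.bddAbove_range
  refine integral_mul_twoScaleChar_eq_zero_of_norm_setIntegral_fderiv_wave_le hS hι hε hε₀ h.memLp
    h.memLp_limit h.tendsto hζ (v := (0, Pi.single j 1)) (M := M)
    (by simpa only [phase_zero_single, Int.cast_ne_zero, Pi.zero_apply] using hj) fun n => ?_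
  rw [(h.hasWeakDerivOn j n).setIntegral_mul_fderiv (h.memLp n) (h.memLp_grad j n) (hζ.wave _),
    norm_neg]
  exact hM ⟨n, rfl⟩

lemma integral_mul_twoScaleChar_pullback_fderiv (h : GradientLimit S r ε u g U V)
    (hS : MeasurableSet S) (hι : ∀ q ∈ S, ι (r q) = q) (k₀ : ℤ) (j : d) {ζ : ℝ × (d → ℝ) → ℝ}
    (hζ : IsTestFunction S ζ) :
    ∫ p, (U p : ℂ) *
        twoScaleChar (pullback ι (hζ.fderiv_apply (0, Pi.single j 1)).continuous) k₀ 0 p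
        ∂twoScaleMeasure (volume.restrict S) r =
      -∫ p, (V j p : ℂ) * twoScaleChar (pullback ι hζ.continuous) k₀ 0 p
        ∂twoScaleMeasure (volume.restrict S) r := by
  refine tendsto_nhds_unique (h.tendsto_wave hS hι (hζ.fderiv_apply _).continuous k₀ 0)
    ((h.tendsto_grad_wave hS hι j hζ.continuous k₀ 0).neg.congr fun n => ?_)
  simp [← (h.hasWeakDerivOn j n).setIntegral_mul_wave_fderiv (h.memLp n) (h.memLp_grad j n) hζ]

lemma curl_integral_mul_twoScaleChar_pullback (h : GradientLimit S r ε u g U V)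
    (hS : MeasurableSet S) (hι : ∀ q ∈ S, ι (r q) = q) (hε : ∀ n, ε n ≠ 0)
    (hε₀ : Tendsto ε atTop (nhds 0)) (k₀ : ℤ) (k : d → ℤ) (i j : d) {ζ : ℝ × (d → ℝ) → ℝ}
    (hζ : IsTestFunction S ζ) :
    k i * ∫ p, (V j p : ℂ) * twoScaleChar (pullback ι hζ.continuous) k₀ k p
        ∂twoScaleMeasure (volume.restrict S) r =
      k j * ∫ p, (V i p : ℂ) * twoScaleChar (pullback ι hζ.continuous) k₀ k p
        ∂twoScaleMeasure (volume.restrict S) r := by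
  rcases eq_or_ne k 0 with rfl | hk
  · simp
  have tendsto_zero : ∀ l, Tendsto (fun n => ∫ q in S, (u n q : ℂ) *
      wave ((ε n)⁻¹ • phase k₀ k) (fun q => fderiv ℝ ζ q (0, Pi.single l 1)) q) atTop
      (nhds 0) := fun l => by
    simpa only [h.integral_mul_twoScaleChar_pullback_eq_zero hS hι hε hε₀ k₀ hk
      (hζ.fderiv_apply _)] using
        h.tendsto_wave hS hι (hζ.fderiv_apply (0, Pi.single l 1)).continuous k₀ k
  have tendsto_grad := fun l => h.tendsto_grad_wave hS hι l hζ.continuous k₀ k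
  have curl_tendsto :=
    ((tendsto_grad j).const_mul (k i : ℂ)).sub ((tendsto_grad i).const_mul (k j : ℂ))
  have curl_tendsto_zero :=
    ((tendsto_zero i).const_mul (k j : ℂ)).sub ((tendsto_zero j).const_mul (k i : ℂ))
  rw [mul_zero, mul_zero, sub_zero] at curl_tendsto_zero
  refine sub_eq_zero.1 (tendsto_nhds_unique curl_tendsto (curl_tendsto_zero.congr fun n => ?_))
  have weak_deriv := fun l => (h.hasWeakDerivOn l n).setIntegral_mul_wave_fderiv (h.memLp n)
    (h.memLp_grad l n) hζ (ε n) k₀ k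
  linear_combination (k j : ℂ) * weak_deriv i - (k i : ℂ) * weak_deriv j

end GradientLimit

end Identification

section FastMeans

variable {B d : Type*} [MetricSpace B] [MeasurableSpace B] [BorelSpace B] [Fintype d]

lemma integral_map_mul_comp {X : Type*} [TopologicalSpace X] [MeasurableSpace X]
    [OpensMeasurableSpace X] {μ : Measure X} {S : Set X} (hS : MeasurableSet S) {r : C(X, B)}
    {ι : C(B, X)} (hι : ∀ q ∈ S, ι (r q) = q) {W : B → ℝ} {η : X → ℝ}
    (h : AEStronglyMeasurable (fun b => W b * η (ι b)) ((μ.restrict S).map r)) :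
    ∫ b, W b * η (ι b) ∂(μ.restrict S).map r = ∫ q in S, W (r q) * η q ∂μ := by
  rw [integral_map r.continuous.aemeasurable h]
  exact setIntegral_congr_fun hS fun q hq => by simp only [hι q hq]

lemma mFourierCoeff_const_mul_sub_const_mul {f g : UnitAddTorus d → ℂ} (hf : Integrable f)
    (hg : Integrable g) (a b : ℂ) (k : d → ℤ) :
    mFourierCoeff (fun y => a * f y - b * g y) k =
      a * mFourierCoeff f k - b * mFourierCoeff g k := by
  have integrable_mFourier_mul : ∀ {f : UnitAddTorus d → ℂ}, Integrable f →
      Integrable fun y => mFourier (-k) y * f y := fun hf => by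
    simpa only [mul_comm] using integrable_mul_continuousMap hf (mFourier (-k))
  simp only [mFourierCoeff, smul_eq_mul, mul_sub, mul_left_comm _ a, mul_left_comm _ b]
  rw [integral_sub ((integrable_mFourier_mul hf).const_mul a)
    ((integrable_mFourier_mul hg).const_mul b), integral_const_mul, integral_const_mul]

variable [CompactSpace B] {ν : Measure B} [IsFiniteMeasure ν] {U : TwoScaleSpace B d → ℝ}
  {ι : C(B, ℝ × (d → ℝ))}

lemma integral_ofReal_mul_twoScaleChar_pullback_zero
    {G : TwoScaleSpace B d → ℝ} (hG : Integrable G ((ν.prod volume).prod volume))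
    {ζ : ℝ × (d → ℝ) → ℝ} (hζ : Continuous ζ) (k₀ : ℤ) :
    ∫ p, (G p : ℂ) * twoScaleChar (pullback ι hζ) k₀ 0 p ∂(ν.prod volume).prod volume =
      ∫ z, (((∫ y, G (z, y)) * ζ (ι z.1) : ℝ) : ℂ) * fourier k₀ z.2 ∂ν.prod volume := by
  refine (integral_mul_twoScaleChar hG.ofReal _ _ _).trans ?_
  simp only [neg_zero, mFourierCoeff_zero_eq_integral, integral_complex_ofReal, pullback_apply,
    Complex.coe_algebraMap, Complex.ofReal_mul, mul_assoc]

lemma memLp_two_integral_prodMk_mul_comp (hU : MemLp U 2 ((ν.prod volume).prod volume))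
    {ζ : ℝ × (d → ℝ) → ℝ} (hζ : Continuous ζ) :
    MemLp (fun z => (∫ y, U (z, y)) * ζ (ι z.1)) 2 (ν.prod volume) :=
  (memLp_continuousMap_comp (𝕜 := ℝ) measurable_fst ⟨ζ ∘ ι, hζ.comp ι.continuous⟩ ⊤).mul
    (memLp_two_integral_prodMk hU)

end FastMeans

section TimeDerivative

variable {d : Type*} [Fintype d] [DecidableEq d] {S : Set (ℝ × (d → ℝ))}

/-- The squared norm of `ζ` in `L²(0,T; H¹(Q))`: only the spatial derivatives are counted. -/
def gradEnergy (S : Set (ℝ × (d → ℝ))) (ζ : ℝ × (d → ℝ) → ℝ) : ℝ :=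
  ∫ q in S, (ζ q ^ 2 + ∑ j, fderiv ℝ ζ q (0, Pi.single j 1) ^ 2)

/-- The time derivatives of the functions `u n` are bounded by `C` in the dual of
`L²(0,T; H¹(Q))`. -/
def TimeDerivBounded (S : Set (ℝ × (d → ℝ))) (u : ℕ → ℝ × (d → ℝ) → ℝ) (C : ℝ) : Prop :=
  ∀ n ζ, IsTestFunction S ζ →
    |∫ q in S, u n q * fderiv ℝ ζ q (1, 0)| ≤ C * √(gradEnergy S ζ)

lemma IsTestFunction.integrable_gradEnergy {ζ : ℝ × (d → ℝ) → ℝ} (hζ : IsTestFunction S ζ) :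
    IntegrableOn (fun q => ζ q ^ 2 + ∑ j, fderiv ℝ ζ q (0, Pi.single j 1) ^ 2) S :=
  (hζ.memLp _ 2).integrable_sq.add
    (integrable_finsetSum _ fun j _ =>
      ((hζ.fderiv_apply (0, Pi.single j 1)).memLp _ 2).integrable_sq)

lemma gradEnergy_wave_le {ζ : ℝ × (d → ℝ) → ℝ} (hζ : IsTestFunction S ζ)
    {L : ℝ × (d → ℝ) →L[ℝ] ℝ} (hL : ∀ j, L (0, Pi.single j 1) = 0) {Λ : ℂ →L[ℝ] ℝ}
    (hΛ : ∀ z, |Λ z| ≤ ‖z‖) : gradEnergy S (fun q => Λ (wave L ζ q)) ≤ gradEnergy S ζ := by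
  have wave_sq_le : ∀ (η : ℝ × (d → ℝ) → ℝ) q, Λ (wave L η q) ^ 2 ≤ η q ^ 2 := fun η q =>
    sq_le_sq.2 ((hΛ _).trans_eq (norm_wave L η q))
  refine integral_mono_of_nonneg (ae_of_all _ fun q => by positivity) hζ.integrable_gradEnergy
    (ae_of_all _ fun q => add_le_add (wave_sq_le ζ q) (Finset.sum_le_sum fun j _ => ?_))
  rw [(hζ.wave L).fderiv_clm_comp, fderiv_wave hζ, hL, Complex.ofReal_zero, mul_zero, zero_mul,
    add_zero]
  exact wave_sq_le _ q

variable {B : Type*} [MetricSpace B] [CompactSpace B] [MeasurableSpace B] [BorelSpace B]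
  [IsFiniteMeasure (volume.restrict S)] {r : C(ℝ × (d → ℝ), B)} {ι : C(B, ℝ × (d → ℝ))}
  {ε : ℕ → ℝ} {u : ℕ → ℝ × (d → ℝ) → ℝ} {U : TwoScaleSpace B d → ℝ}

theorem TimeDerivBounded.integral_mul_twoScaleChar_pullback_eq_zero {C : ℝ}
    (h : TimeDerivBounded S u C) (hS : MeasurableSet S) (hι : ∀ q ∈ S, ι (r q) = q)
    (hε : ∀ n, ε n ≠ 0) (hε₀ : Tendsto ε atTop (nhds 0))
    (hu : ∀ n, MemLp (u n) 2 (volume.restrict S))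
    (hU : MemLp U 2 (twoScaleMeasure (volume.restrict S) r))
    (hlim : TendstoAlong (volume.restrict S) (fun n => twoScaleMap r (ε n))
      (twoScaleMeasure (volume.restrict S) r) u U)
    {k₀ : ℤ} (hk₀ : k₀ ≠ 0) {ζ : ℝ × (d → ℝ) → ℝ} (hζ : IsTestFunction S ζ) :
    ∫ p, (U p : ℂ) * twoScaleChar (pullback ι hζ.continuous) k₀ 0 p
      ∂twoScaleMeasure (volume.restrict S) r = 0 := by
  have wave_bound : ∀ n {Λ : ℂ →L[ℝ] ℝ}, (∀ z, |Λ z| ≤ ‖z‖) →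
      |∫ q in S, u n q * fderiv ℝ (fun q => Λ (wave ((ε n)⁻¹ • phase k₀ 0) ζ q)) q (1, 0)| ≤
        |C| * √(gradEnergy S ζ) := fun n Λ hΛ =>
    (h n _ ((hζ.wave _).clm_comp Λ)).trans <| mul_le_mul (le_abs_self C)
      (Real.sqrt_le_sqrt (gradEnergy_wave_le hζ (fun j => by simp [phase_zero_single]) hΛ))
      (Real.sqrt_nonneg _) (abs_nonneg C)
  exact integral_mul_twoScaleChar_eq_zero_of_norm_setIntegral_fderiv_wave_le hS hι hε hε₀ hu hU
    hlim hζ (v := (1, 0)) (by simpa [phase_one_zero] using hk₀) fun n =>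
      norm_setIntegral_mul_fderiv_le (hu n) (hζ.wave _)
        (wave_bound n (Λ := Complex.reCLM) Complex.abs_re_le_norm)
        (wave_bound n (Λ := Complex.imCLM) Complex.abs_im_le_norm)

theorem TimeDerivBounded.ae_integral_eq_integral_integral {C : ℝ}
    (h : TimeDerivBounded S u C) (hS : IsOpen S) (hι : ∀ q ∈ S, ι (r q) = q)
    (hε : ∀ n, ε n ≠ 0) (hε₀ : Tendsto ε atTop (nhds 0))
    (hu : ∀ n, MemLp (u n) 2 (volume.restrict S))
    (hU : MemLp U 2 (twoScaleMeasure (volume.restrict S) r))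
    (hlim : TendstoAlong (volume.restrict S) (fun n => twoScaleMap r (ε n))
      (twoScaleMeasure (volume.restrict S) r) u U) :
    ∀ᵐ z ∂((volume.restrict S).map r).prod volume,
      ∫ y, U (z, y) = ∫ s, ∫ y, U ((z.1, s), y) := by
  have complex_eq := ae_eq_integral_snd_of_integral_mul_fourier_eq_zero
    (memLp_two_integral_prodMk hU).ofReal fun f k₀ hk₀ => by
      refine Eq.trans ?_ (integral_mul_twoScaleChar_eq_zero_of_forall_pullback hS hι hU.ofReal
        (fun ζ hζ => h.integral_mul_twoScaleChar_pullback_eq_zero hS.measurableSet hι hε hε₀ hu hU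
          hlim hk₀ hζ) f)
      refine Eq.trans ?_ (integral_mul_twoScaleChar (hU.ofReal.integrable one_le_two) f k₀ 0).symm
      simp only [neg_zero, mFourierCoeff_zero_eq_integral]
      simp only [Complex.coe_algebraMap, integral_complex_ofReal]
  filter_upwards [complex_eq] with z hz
  exact Complex.ofReal_injective (hz.trans integral_complex_ofReal)

end TimeDerivative

section LimitIdentities

variable {B d : Type*} [MetricSpace B] [CompactSpace B] [MeasurableSpace B] [BorelSpace B]
  [Fintype d] [DecidableEq d] {S : Set (ℝ × (d → ℝ))} [IsFiniteMeasure (volume.restrict S)]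
  {r : C(ℝ × (d → ℝ), B)} {ι : C(B, ℝ × (d → ℝ))} {ε : ℕ → ℝ} {u : ℕ → ℝ × (d → ℝ) → ℝ}
  {g : d → ℕ → ℝ × (d → ℝ) → ℝ} {U : TwoScaleSpace B d → ℝ} {V : d → TwoScaleSpace B d → ℝ}

namespace GradientLimit

theorem ae_eq_integral_snd (h : GradientLimit S r ε u g U V) (hS : IsOpen S)
    (hι : ∀ q ∈ S, ι (r q) = q) (hε : ∀ n, ε n ≠ 0) (hε₀ : Tendsto ε atTop (nhds 0)) :
    U =ᵐ[twoScaleMeasure (volume.restrict S) r] fun p => ∫ y, U (p.1, y) := by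
  have complex_eq := ae_eq_integral_snd_of_integral_mul_twoScaleChar_eq_zero h.memLp_limit.ofReal
    fun f k₀ k hk => integral_mul_twoScaleChar_eq_zero_of_forall_pullback hS hι
      h.memLp_limit.ofReal
      (fun ζ hζ => h.integral_mul_twoScaleChar_pullback_eq_zero hS.measurableSet hι hε hε₀ k₀ hk hζ)
      f
  filter_upwards [complex_eq] with p hp
  exact Complex.ofReal_injective (hp.trans integral_complex_ofReal)

theorem ae_curl_mFourierCoeff_eq_zero (h : GradientLimit S r ε u g U V) (hS : IsOpen S)
    (hι : ∀ q ∈ S, ι (r q) = q) (hε : ∀ n, ε n ≠ 0) (hε₀ : Tendsto ε atTop (nhds 0))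
    (k : d → ℤ) (i j : d) :
    ∀ᵐ z ∂((volume.restrict S).map r).prod volume,
      (k i : ℂ) * mFourierCoeff (fun y => (V j (z, y) : ℂ)) k =
        k j * mFourierCoeff (fun y => (V i (z, y) : ℂ)) k := by
  have hV := fun l => (h.memLp_limit_grad l).ofReal (K := ℂ)
  have memLp_curl : MemLp (fun p => (k i : ℂ) * V j p - k j * V i p) 2
      (twoScaleMeasure (volume.restrict S) r) := ((hV j).const_mul _).sub ((hV i).const_mul _)
  have integral_curl : ∀ k₀ ζ (hζ : IsTestFunction S ζ),
      ∫ p, ((k i : ℂ) * V j p - k j * V i p) * twoScaleChar (pullback ι hζ.continuous) k₀ (-k) p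
        ∂twoScaleMeasure (volume.restrict S) r = 0 := fun k₀ ζ hζ => by
    have integrable_mul := fun l => integrable_mul_continuousMap ((hV l).integrable one_le_two)
      (twoScaleChar (pullback ι hζ.continuous) k₀ (-k))
    have curl := h.curl_integral_mul_twoScaleChar_pullback hS.measurableSet hι hε hε₀ k₀ (-k) i j hζ
    simp only [sub_mul, mul_assoc]
    refine (integral_sub ((integrable_mul j).const_mul _) ((integrable_mul i).const_mul _)).trans ?_
    simp only [integral_const_mul]
    simp only [Pi.neg_apply, Int.cast_neg, neg_mul, neg_inj] at curl
    exact sub_eq_zero.2 curl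
  filter_upwards [ae_mFourierCoeff_eq_zero_of_integral_mul_twoScaleChar_eq_zero (k := k) memLp_curl
      fun f k₀ => integral_mul_twoScaleChar_eq_zero_of_forall_pullback hS hι memLp_curl
        (integral_curl k₀) f,
    ae_memLp_two_prodMk (hV i), ae_memLp_two_prodMk (hV j)] with z hz hi hj
  exact sub_eq_zero.1 ((mFourierCoeff_const_mul_sub_const_mul (hj.integrable one_le_two)
    (hi.integrable one_le_two) _ _ k).symm.trans hz)

theorem ae_setIntegral_mul_fderiv_eq (h : GradientLimit S r ε u g U V) (hS : MeasurableSet S)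
    (hι : ∀ q ∈ S, ι (r q) = q) (j : d) {ζ : ℝ × (d → ℝ) → ℝ} (hζ : IsTestFunction S ζ) :
    ∀ᵐ s, ∫ q in S, (∫ y, U ((r q, s), y)) * fderiv ℝ ζ q (0, Pi.single j 1) =
      -∫ q in S, (∫ y, V j ((r q, s), y)) * ζ q := by
  have hζ' := hζ.fderiv_apply (0, Pi.single j 1)
  have memLp_U := memLp_two_integral_prodMk_mul_comp (ι := ι) h.memLp_limit hζ'.continuous
  have memLp_V := memLp_two_integral_prodMk_mul_comp (ι := ι) (h.memLp_limit_grad j) hζ.continuous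
  have integrable_mul_fourier : ∀ {Φ : B × UnitAddCircle → ℝ} (k₀ : ℤ),
      MemLp Φ 2 (((volume.restrict S).map r).prod volume) → Integrable
        (fun z => (Φ z : ℂ) * fourier k₀ z.2) (((volume.restrict S).map r).prod volume) :=
    fun k₀ hΦ => integrable_mul_continuousMap_comp measurable_snd
      (hΦ.ofReal.integrable one_le_two) (fourier k₀)
  have integral_add_eq_zero := ae_integral_prodMk_eq_zero_of_forall_integral_mul_fourier_eq_zero
    (memLp_U.add memLp_V) fun k₀ => by
      have := h.integral_mul_twoScaleChar_pullback_fderiv hS hι k₀ j hζ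
      rw [integral_ofReal_mul_twoScaleChar_pullback_zero (h.memLp_limit.integrable one_le_two),
        integral_ofReal_mul_twoScaleChar_pullback_zero
          ((h.memLp_limit_grad j).integrable one_le_two), ← add_eq_zero_iff_eq_neg,
        ← integral_add (integrable_mul_fourier k₀ memLp_U)
          (integrable_mul_fourier k₀ memLp_V)] at this
      simpa only [Pi.add_apply, Complex.ofReal_add, add_mul] using this
  filter_upwards [integral_add_eq_zero, (memLp_U.integrable one_le_two).prod_left_ae,
    (memLp_V.integrable one_le_two).prod_left_ae] with s hs hU hV
  rw [← integral_map_mul_comp hS hι (W := fun b => ∫ y, U ((b, s), y)) hU.aestronglyMeasurable,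
    ← integral_map_mul_comp hS hι (W := fun b => ∫ y, V j ((b, s), y)) hV.aestronglyMeasurable,
    ← add_eq_zero_iff_eq_neg, ← integral_add hU hV]
  exact hs

end GradientLimit

end LimitIdentities

section Periodicity

variable {B d : Type*} [TopologicalSpace B]

lemma coe_add_intCast (s : ℝ) (l : ℤ) : ((s + l : ℝ) : UnitAddCircle) = s := by
  simp

lemma toTorus_add_intCast (y : d → ℝ) (k : d → ℤ) : toTorus (fun i => y i + k i) = toTorus y :=
  funext fun i => coe_add_intCast (y i) (k i)

lemma exists_eq_add_intCast_of_coe_eq {s s' : ℝ} (h : (s : UnitAddCircle) = s') :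
    ∃ l : ℤ, s = s' + l := by
  obtain ⟨l, hl⟩ := AddSubgroup.mem_zmultiples_iff.1 (QuotientAddGroup.eq.1 h.symm)
  exact ⟨l, by simp at hl; linarith⟩

lemma isOpenQuotientMap_prodMap_toTorus :
    IsOpenQuotientMap (Prod.map (Prod.map (id : B → B) fun s : ℝ => (s : UnitAddCircle))
      (toTorus (d := d))) :=
  (IsOpenQuotientMap.id.prodMap QuotientAddGroup.isOpenQuotientMap_mk).prodMap
    (IsOpenQuotientMap.piMap fun _ => QuotientAddGroup.isOpenQuotientMap_mk)

lemma exists_continuousMap_eq_of_periodic {f : B → ℝ → (d → ℝ) → ℝ}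
    (hf : Continuous fun p : (B × ℝ) × (d → ℝ) => f p.1.1 p.1.2 p.2)
    (hper : ∀ b τ y (l : ℤ) (k : d → ℤ), f b (τ + l) (fun i => y i + k i) = f b τ y) :
    ∃ Ψ : C(TwoScaleSpace B d, ℝ), ∀ b (τ : ℝ) y,
      Ψ ((b, (τ : UnitAddCircle)), toTorus y) = f b τ y := by
  have quotient := isOpenQuotientMap_prodMap_toTorus (B := B) (d := d)
  let π : C((B × ℝ) × (d → ℝ), TwoScaleSpace B d) := ⟨_, quotient.continuous⟩
  have hπ : Topology.IsQuotientMap π := quotient.isQuotientMap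
  let F : C((B × ℝ) × (d → ℝ), ℝ) := ⟨_, hf⟩
  have factors : Function.FactorsThrough F π := by
    rintro ⟨⟨b, τ⟩, y⟩ ⟨⟨b', τ'⟩, y'⟩ h
    simp only [π, ContinuousMap.coe_mk, Prod.map_apply, id_eq, Prod.mk.injEq] at h
    obtain ⟨⟨rfl, hτ⟩, hy⟩ := h
    obtain ⟨l, rfl⟩ := exists_eq_add_intCast_of_coe_eq hτ
    choose k hk using fun i => exists_eq_add_intCast_of_coe_eq (congrFun hy i)
    obtain rfl : y = fun i => y' i + k i := funext hk
    exact hper _ _ _ _ _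
  exact ⟨hπ.lift F factors, fun b τ y =>
    DFunLike.congr_fun (hπ.lift_comp F factors) ((b, τ), y)⟩

end Periodicity

section UnitCells

variable {B Ω : Type*} [MeasurableSpace B] [MeasurableSpace Ω] {N : ℕ} {μ : Measure Ω}
  [IsFiniteMeasure μ] {r : Ω → B}

lemma measurePreserving_coe_cellT :
    MeasurePreserving (fun τ : ℝ => (τ : UnitAddCircle)) (volume.restrict cellT) volume := by
  simpa only [cellT, zero_add] using measurePreserving_coe_unitAddCircle 0

lemma measurePreserving_toTorus_cellY :
    MeasurePreserving toTorus (volume.restrict (cellY N)) volume := by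
  simpa only [cellY, Pi.zero_apply, zero_add] using measurePreserving_toTorus (0 : Fin N → ℝ)

lemma measurePreserving_prodMap_cellT (hr : Measurable r) :
    MeasurePreserving (Prod.map r fun τ : ℝ => (τ : UnitAddCircle))
      (μ.prod (volume.restrict cellT)) ((μ.map r).prod volume) :=
  (hr.measurePreserving μ).prod measurePreserving_coe_cellT

lemma measurePreserving_prodMap_cellY (hr : Measurable r) :
    MeasurePreserving (Prod.map (Prod.map r fun τ : ℝ => (τ : UnitAddCircle)) toTorus)
      ((μ.prod (volume.restrict cellT)).prod (volume.restrict (cellY N)))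
      (((μ.map r).prod volume).prod volume) :=
  (measurePreserving_prodMap_cellT hr).prod measurePreserving_toTorus_cellY

lemma integral_comp_of_measurePreserving {X Y E : Type*} [MeasurableSpace X] [MeasurableSpace Y]
    [NormedAddCommGroup E] [NormedSpace ℝ E] {μ : Measure X} {ν : Measure Y} {f : X → Y}
    (hf : MeasurePreserving f μ ν) {g : Y → E} (hg : AEStronglyMeasurable g ν) :
    ∫ x, g (f x) ∂μ = ∫ y, g y ∂ν := by
  rw [← hf.map_eq] at hg ⊢
  exact (integral_map hf.aemeasurable hg).symm

lemma integral_prod_map_eq_integral_cellT (hr : Measurable r) {F : B × UnitAddCircle → ℝ}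
    (hF : Integrable F ((μ.map r).prod volume)) :
    ∫ z, F z ∂(μ.map r).prod volume = ∫ ω, (∫ τ in cellT, F (r ω, (τ : UnitAddCircle))) ∂μ := by
  have hm := measurePreserving_prodMap_cellT (μ := μ) hr
  rw [← integral_comp_of_measurePreserving hm hF.aestronglyMeasurable]
  exact integral_prod _ (hm.integrable_comp_of_integrable hF)

lemma integral_prod_map_eq_integral_cellT_cellY (hr : Measurable r)
    {F : TwoScaleSpace B (Fin N) → ℝ} (hF : Integrable F (((μ.map r).prod volume).prod volume)) :
    ∫ p, F p ∂((μ.map r).prod volume).prod volume =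
      ∫ ω, (∫ τ in cellT, ∫ y in cellY N, F ((r ω, (τ : UnitAddCircle)), toTorus y)) ∂μ := by
  have hm := measurePreserving_prodMap_cellY (N := N) (μ := μ) hr
  have integrable_comp := hm.integrable_comp_of_integrable hF
  rw [← integral_comp_of_measurePreserving hm hF.aestronglyMeasurable]
  exact (integral_prod _ integrable_comp).trans (integral_prod _ integrable_comp.integral_prod_left)

variable {S : Set (ℝ × Vn N)} [IsFiniteMeasure (volume.restrict S)] {r : ℝ × Vn N → B}

lemma measurePreserving_restrict_prod_cellT (hr : Measurable r) :
    MeasurePreserving (Prod.map r fun τ : ℝ => (τ : UnitAddCircle))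
      (volume.restrict (S ×ˢ cellT)) (((volume.restrict S).map r).prod volume) := by
  have := measurePreserving_prodMap_cellT (μ := volume.restrict S) hr
  rwa [Measure.prod_restrict] at this

lemma measurePreserving_restrict_prod_cellT_prod_cellY (hr : Measurable r) :
    MeasurePreserving (Prod.map (Prod.map r fun τ : ℝ => (τ : UnitAddCircle)) toTorus)
      (volume.restrict ((S ×ˢ cellT) ×ˢ cellY N))
      ((((volume.restrict S).map r).prod volume).prod volume) := by
  have := measurePreserving_prodMap_cellY (N := N) (μ := volume.restrict S) hr
  rwa [Measure.prod_restrict, Measure.prod_restrict] at this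

end UnitCells

lemma TendstoAlong.congr_limit {K Ω : Type*} [TopologicalSpace K] [MeasurableSpace K]
    [MeasurableSpace Ω] {μ : Measure Ω} {ρ : ℕ → Ω → K} {m : Measure K} {u : ℕ → Ω → ℝ}
    {V V' : K → ℝ} (h : TendstoAlong μ ρ m u V) (hV : V =ᵐ[m] V') : TendstoAlong μ ρ m u V' :=
  fun Ψ => by
    rw [← integral_congr_ae (hV.mono fun p hp => congrArg (· * Ψ p) hp)]
    exact h Ψ

section Transfer

variable {B : Type*} [MetricSpace B] [CompactSpace B] [MeasurableSpace B] [BorelSpace B] {N : ℕ}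
  {S : Set (ℝ × Vn N)} [IsFiniteMeasure (volume.restrict S)] {r : C(ℝ × Vn N, B)}
  {ι : C(B, ℝ × Vn N)} {ε : ℕ → ℝ} {a : ℕ → ℝ × Vn N → ℝ} {F : TwoScaleSpace B (Fin N) → ℝ}

theorem weakTwoScale_of_tendstoAlong (hS : MeasurableSet S) (hι : ∀ q ∈ S, ι (r q) = q)
    (hF : MemLp F 2 (twoScaleMeasure (volume.restrict S) r))
    (h : TendstoAlong (volume.restrict S) (fun n => twoScaleMap r (ε n))
      (twoScaleMeasure (volume.restrict S) r) a F) :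
    WeakTwoScale N S 2 ε a fun q τ y => F ((r q, (τ : UnitAddCircle)), toTorus y) := by
  intro ψ hψ
  obtain ⟨Ψ, hΨ⟩ := exists_continuousMap_eq_of_periodic
    (f := fun b τ y => ψ (ι b).1 (ι b).2 τ y)
    (hψ.cont.comp (f := fun p : (B × ℝ) × Vn N => (ι p.1.1, p.1.2, p.2)) (by fun_prop))
    fun b => hψ.per _ _
  have integrable_mul : Integrable (fun p => F p * Ψ p) (twoScaleMeasure (volume.restrict S) r) :=
    integrable_mul_continuousMap (hF.integrable one_le_two) Ψ
  have tendsto := h Ψ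
  rw [integral_prod_map_eq_integral_cellT_cellY r.continuous.measurable integrable_mul] at tendsto
  refine (tendsto.congr fun n => ?_).mono_right (congrArg nhds ?_).le
  · exact setIntegral_congr_fun hS fun q hq => by simp [twoScaleMap, hΨ, hι q hq]
  · exact setIntegral_congr_fun hS fun q hq => by simp only [hΨ, hι q hq]

theorem tendsto_setIntegral_mul_of_tendstoAlong (hS : MeasurableSet S)
    (hι : ∀ q ∈ S, ι (r q) = q) (ha : ∀ n, MemLp (a n) 2 (volume.restrict S)) {C : ℝ}
    (hC : ∀ n, ∫ q in S, a n q ^ 2 ≤ C) (hF : MemLp F 2 (twoScaleMeasure (volume.restrict S) r))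
    (h : TendstoAlong (volume.restrict S) (fun n => twoScaleMap r (ε n))
      (twoScaleMeasure (volume.restrict S) r) a F)
    {v : ℝ × Vn N → ℝ} (hv : MemLp v 2 (volume.restrict S)) :
    Tendsto (fun n => ∫ q in S, a n q * v q) atTop
      (nhds (∫ q in S, (∫ τ in cellT, ∫ y, F ((r q, (τ : UnitAddCircle)), y)) * v q)) := by
  have : IsFiniteMeasure (volume.restrict cellT) :=
    inferInstanceAs (IsFiniteMeasure (volume.restrict (Ioo (0 : ℝ) 1)))
  have memLp_mean : MemLp (fun q => ∫ τ in cellT, ∫ y, F ((r q, (τ : UnitAddCircle)), y)) 2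
      (volume.restrict S) :=
    memLp_two_integral_prodMk ((memLp_two_integral_prodMk hF).comp_measurePreserving
      (measurePreserving_prodMap_cellT r.continuous.measurable))
  refine tendsto_integral_mul_of_forall_continuous ha memLp_mean hC (fun g hg => ?_) hv
  let Ψ : C(TwoScaleSpace B (Fin N), ℝ) := ⟨fun p => g (ι p.1.1), hg.comp (by fun_prop)⟩
  have integrable_mul : Integrable (fun p => F p * Ψ p) (twoScaleMeasure (volume.restrict S) r) :=
    integrable_mul_continuousMap (hF.integrable one_le_two) Ψ
  have tendsto := h Ψ
  rw [integral_prod _ integrable_mul] at tendsto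
  simp only [Ψ, ContinuousMap.coe_mk, integral_mul_const] at tendsto
  rw [integral_prod_map_eq_integral_cellT r.continuous.measurable
    ((memLp_two_integral_prodMk_mul_comp hF hg).integrable one_le_two)] at tendsto
  simp only [integral_mul_const] at tendsto
  refine (tendsto.congr fun n => ?_).mono_right (congrArg nhds ?_).le
  · exact setIntegral_congr_fun hS fun q hq => by simp [twoScaleMap, hι q hq]
  · exact setIntegral_congr_fun hS fun q hq => by simp [hι q hq]

end Transfer

section SquareIntegrability

variable {Ω J : Type*} [MeasurableSpace Ω] {μ : Measure Ω} [Fintype J] {f : Ω → ℝ}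
  {g : J → Ω → ℝ}

lemma integrable_sq_add_sum_sq (hf : MemLp f 2 μ) (hg : ∀ j, MemLp (g j) 2 μ) :
    Integrable (fun q => f q ^ 2 + ∑ j, g j q ^ 2) μ :=
  hf.integrable_sq.add (integrable_finsetSum _ fun j _ => (hg j).integrable_sq)

lemma memLp_two_and_integral_sq_le {h E : Ω → ℝ} (hh : AEStronglyMeasurable h μ)
    (hE : Integrable E μ) (hle : ∀ q, h q ^ 2 ≤ E q) :
    MemLp h 2 μ ∧ ∫ q, h q ^ 2 ∂μ ≤ ∫ q, E q ∂μ := by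
  have integrable_sq : Integrable (fun q => h q ^ 2) μ :=
    hE.mono' (hh.pow 2) (ae_of_all _ fun q => by simpa using hle q)
  exact ⟨(memLp_two_iff_integrable_sq hh).2 integrable_sq, integral_mono integrable_sq hE hle⟩

lemma memLp_two_and_integral_sq_le_left (hf : AEStronglyMeasurable f μ)
    (hfg : Integrable (fun q => f q ^ 2 + ∑ j, g j q ^ 2) μ) :
    MemLp f 2 μ ∧ ∫ q, f q ^ 2 ∂μ ≤ ∫ q, (f q ^ 2 + ∑ j, g j q ^ 2) ∂μ :=
  memLp_two_and_integral_sq_le hf hfg fun _ =>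
    le_add_of_nonneg_right (Finset.sum_nonneg fun _ _ => sq_nonneg _)

lemma memLp_two_and_integral_sq_le_right {j : J} (hg : AEStronglyMeasurable (g j) μ)
    (hfg : Integrable (fun q => f q ^ 2 + ∑ j, g j q ^ 2) μ) :
    MemLp (g j) 2 μ ∧ ∫ q, g j q ^ 2 ∂μ ≤ ∫ q, (f q ^ 2 + ∑ j, g j q ^ 2) ∂μ :=
  memLp_two_and_integral_sq_le hg hfg fun q =>
    (Finset.single_le_sum (f := fun j => g j q ^ 2) (fun _ _ => sq_nonneg _)
      (Finset.mem_univ j)).trans (le_add_of_nonneg_left (sq_nonneg _))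

end SquareIntegrability

section Retraction

lemma exists_retraction_Icc {d : Type*} {S : Set (ℝ × (d → ℝ))}
    (hS : Bornology.IsBounded S) :
    ∃ (a b : ℝ × (d → ℝ)) (r : C(ℝ × (d → ℝ), Icc a b)), ∀ q ∈ S, (r q : ℝ × (d → ℝ)) = q := by
  obtain ⟨a, ha⟩ := hS.bddBelow
  obtain ⟨b, hb⟩ := hS.bddAbove
  have clamp_mem : ∀ q, (q ⊓ b) ⊔ (a ⊓ b) ∈ Icc (a ⊓ b) b := fun q =>
    ⟨le_sup_right, sup_le inf_le_right inf_le_right⟩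
  have continuous_clamp : Continuous fun q : ℝ × (d → ℝ) => (q ⊓ b) ⊔ (a ⊓ b) :=
    ((continuous_fst.inf continuous_const).sup continuous_const).prodMk
      (continuous_pi fun i => (((continuous_apply i).comp continuous_snd).inf
        continuous_const).sup continuous_const)
  refine ⟨a ⊓ b, b, ⟨fun q => ⟨_, clamp_mem q⟩, continuous_clamp.subtype_mk _⟩, fun q hq => ?_⟩
  have le_q : a ⊓ b ≤ q := inf_le_left.trans (ha hq)
  simp [inf_eq_left.2 (hb hq), le_q]

end Retraction

section Existence

variable {B d : Type*} [MetricSpace B] [CompactSpace B] [MeasurableSpace B] [BorelSpace B]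
  [Fintype d] [DecidableEq d] {S : Set (ℝ × (d → ℝ))} [IsFiniteMeasure (volume.restrict S)]
  {ε : ℕ → ℝ} {u : ℕ → ℝ × (d → ℝ) → ℝ} {g : d → ℕ → ℝ × (d → ℝ) → ℝ}

theorem exists_gradientLimit (hS : MeasurableSet S) (r : C(ℝ × (d → ℝ), B))
    (hε : ∀ n, 0 < ε n) (hε₀ : Tendsto ε atTop (nhds 0))
    (hu : ∀ n, AEStronglyMeasurable (u n) (volume.restrict S))
    (hg : ∀ j n, AEStronglyMeasurable (g j n) (volume.restrict S))
    (hug : ∀ j n, HasWeakDerivOn S (0, Pi.single j 1) (u n) (g j n))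
    (henergy : ∀ n, IntegrableOn (fun q => u n q ^ 2 + ∑ j, g j n q ^ 2) S) {C : ℝ}
    (hC : ∀ n, ∫ q in S, (u n q ^ 2 + ∑ j, g j n q ^ 2) ≤ C) :
    ∃ φ : ℕ → ℕ, StrictMono φ ∧ ∃ U V,
      GradientLimit S r (fun n => ε (φ n)) (fun n => u (φ n)) (fun j n => g j (φ n)) U V := by
  have hu2 := fun n => memLp_two_and_integral_sq_le_left (hu n) (henergy n)
  have hg2 := fun j n => memLp_two_and_integral_sq_le_right (g := (g · n)) (hg j n) (henergy n)
  have hu_le : ∀ n, ∫ q in S, u n q ^ 2 ≤ C := fun n => (hu2 n).2.trans (hC n)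
  have hg_le : ∀ j n, ∫ q in S, g j n q ^ 2 ≤ C := fun j n => (hg2 j n).2.trans (hC n)
  obtain ⟨φ, hφ, W, hW⟩ := (equidistributed_twoScaleMap hS r hε hε₀).exists_forall_tendstoAlong
    (fun n => (twoScaleMap r (ε n)).continuous.measurable) (u := fun i : Option d => i.elim u g)
    (Option.forall.2 ⟨fun n => (hu2 n).1, fun j n => (hg2 j n).1⟩)
    (Option.forall.2 ⟨hu_le, hg_le⟩)
  exact ⟨φ, hφ, W none, fun j => W (some j),
    { memLp := fun n => (hu2 _).1
      memLp_grad := fun j n => (hg2 j _).1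
      hasWeakDerivOn := fun j n => hug j _
      bounded := ⟨C, fun n => hu_le _⟩
      bounded_grad := ⟨C, fun j n => hg_le j _⟩
      memLp_limit := (hW none).1
      memLp_limit_grad := fun j => (hW (some j)).1
      tendsto := (hW none).2
      tendsto_grad := fun j => (hW (some j)).2 }⟩

end Existence

section Corrector

variable {B d : Type*} [MetricSpace B] [CompactSpace B] [MeasurableSpace B] [BorelSpace B]
  [Fintype d] [DecidableEq d] {S : Set (ℝ × (d → ℝ))} [IsFiniteMeasure (volume.restrict S)]
  {r : C(ℝ × (d → ℝ), B)} {ι : C(B, ℝ × (d → ℝ))} {ε : ℕ → ℝ} {u : ℕ → ℝ × (d → ℝ) → ℝ}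
  {g : d → ℕ → ℝ × (d → ℝ) → ℝ} {U : TwoScaleSpace B d → ℝ} {V : d → TwoScaleSpace B d → ℝ}

theorem GradientLimit.exists_corrector (h : GradientLimit S r ε u g U V) (hS : IsOpen S)
    (hι : ∀ q ∈ S, ι (r q) = q) (hε : ∀ n, ε n ≠ 0) (hε₀ : Tendsto ε atTop (nhds 0)) :
    ∃ (w : TwoScaleSpace B d → ℝ) (D : d → TwoScaleSpace B d → ℝ),
      MemLp w 2 (twoScaleMeasure (volume.restrict S) r) ∧
      (∀ j, MemLp (D j) 2 (twoScaleMeasure (volume.restrict S) r)) ∧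
      (∀ z, Integrable (fun y => w (z, y)) ∧ ∫ y, w (z, y) = 0) ∧
      (∀ z j, HasWeakDerivOn univ (Pi.single j 1) (fun y => w (z, toTorus y))
        fun y => D j (z, toTorus y)) ∧
      ∀ j, V j =ᵐ[twoScaleMeasure (volume.restrict S) r]
        fun p => (∫ y, V j (p.1, y)) + D j p := by
  obtain ⟨w, D, hw, hD, mean_zero, hwD, hDV⟩ := exists_periodic_potential h.memLp_limit_grad
    fun k i j => h.ae_curl_mFourierCoeff_eq_zero hS hι hε hε₀ k i j
  refine ⟨w, D, hw, hD, mean_zero, hwD, fun j => ?_⟩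
  filter_upwards [hDV j] with p hp
  rw [hp, add_sub_cancel]

end Corrector

lemma HasWeakDerivOn.integral_mul_pdN {N : ℕ} {j : Fin N} {f g : Vn N → ℝ}
    (h : HasWeakDerivOn univ (Pi.single j 1) f g) {ζ : Vn N → ℝ} (hζ : ContDiff ℝ (⊤ : ℕ∞) ζ)
    (hζc : HasCompactSupport ζ) : ∫ y, f y * pdN ζ j y = -∫ y, g y * ζ y := by
  simpa only [setIntegral_univ, pdN] using h ζ ⟨hζ, hζc, subset_univ _⟩

section Conclusion

variable {B : Type*} [MetricSpace B] [MeasurableSpace B] [BorelSpace B] {N : ℕ}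
  {S : Set (ℝ × Vn N)} [IsFiniteMeasure (volume.restrict S)] {r : C(ℝ × Vn N, B)}
  {ι : C(B, ℝ × Vn N)} {ε : ℕ → ℝ} {u : ℕ → ℝ × Vn N → ℝ} {g : Fin N → ℕ → ℝ × Vn N → ℝ}
  {U : TwoScaleSpace B (Fin N) → ℝ} {V : Fin N → TwoScaleSpace B (Fin N) → ℝ}

namespace GradientLimit

theorem integrableOn_sq_mean_add_sum_sq_mean_grad (h : GradientLimit S r ε u g U V) :
    IntegrableOn (fun z : (ℝ × Vn N) × ℝ => (∫ y, U ((r z.1, (z.2 : UnitAddCircle)), y)) ^ 2 +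
      ∑ j, (∫ y, V j ((r z.1, (z.2 : UnitAddCircle)), y)) ^ 2) (S ×ˢ cellT) :=
  (measurePreserving_restrict_prod_cellT r.continuous.measurable).integrable_comp_of_integrable
    (integrable_sq_add_sum_sq (memLp_two_integral_prodMk h.memLp_limit)
      fun j => memLp_two_integral_prodMk (h.memLp_limit_grad j))

variable [CompactSpace B]

theorem weakTwoScale (h : GradientLimit S r ε u g U V) (hS : IsOpen S)
    (hι : ∀ q ∈ S, ι (r q) = q) (hε : ∀ n, ε n ≠ 0) (hε₀ : Tendsto ε atTop (nhds 0)) :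
    WeakTwoScale N S 2 ε u fun q τ _ => ∫ y, U ((r q, (τ : UnitAddCircle)), y) := by
  have mean_eq := h.ae_eq_integral_snd hS hι hε hε₀
  exact weakTwoScale_of_tendstoAlong hS.measurableSet hι (h.memLp_limit.ae_eq mean_eq)
    (h.tendsto.congr_limit mean_eq)

theorem weakTwoScale_grad (h : GradientLimit S r ε u g U V) (hS : MeasurableSet S)
    (hι : ∀ q ∈ S, ι (r q) = q) {j : Fin N} {D : TwoScaleSpace B (Fin N) → ℝ}
    (hD : V j =ᵐ[twoScaleMeasure (volume.restrict S) r] fun p => (∫ y, V j (p.1, y)) + D p) :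
    WeakTwoScale N S 2 ε (g j) fun q τ y =>
      (∫ y', V j ((r q, (τ : UnitAddCircle)), y')) + D ((r q, (τ : UnitAddCircle)), toTorus y) :=
  weakTwoScale_of_tendstoAlong hS hι ((h.memLp_limit_grad j).ae_eq hD)
    ((h.tendsto_grad j).congr_limit hD)

theorem tendsto_setIntegral_mul (h : GradientLimit S r ε u g U V) (hS : MeasurableSet S)
    (hι : ∀ q ∈ S, ι (r q) = q) {v : ℝ × Vn N → ℝ} (hv : MemLp v 2 (volume.restrict S)) :
    Tendsto (fun n => ∫ q in S, u n q * v q) atTop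
      (nhds (∫ q in S, (∫ τ in cellT, ∫ y, U ((r q, (τ : UnitAddCircle)), y)) * v q)) := by
  obtain ⟨C, hC⟩ := h.bounded
  exact tendsto_setIntegral_mul_of_tendstoAlong hS hι h.memLp hC h.memLp_limit h.tendsto hv

theorem tendsto_setIntegral_grad_mul (h : GradientLimit S r ε u g U V) (hS : MeasurableSet S)
    (hι : ∀ q ∈ S, ι (r q) = q) {v : ℝ × Vn N → ℝ} (hv : MemLp v 2 (volume.restrict S))
    (j : Fin N) :
    Tendsto (fun n => ∫ q in S, g j n q * v q) atTop
      (nhds (∫ q in S, (∫ τ in cellT, ∫ y, V j ((r q, (τ : UnitAddCircle)), y)) * v q)) := by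
  obtain ⟨C, hC⟩ := h.bounded_grad
  exact tendsto_setIntegral_mul_of_tendstoAlong hS hι (h.memLp_grad j) (hC j)
    (h.memLp_limit_grad j) (h.tendsto_grad j) hv

theorem exists_ae_mean_eq (h : GradientLimit S r ε u g U V) (hS : IsOpen S)
    (hι : ∀ q ∈ S, ι (r q) = q) (hε : ∀ n, ε n ≠ 0) (hε₀ : Tendsto ε atTop (nhds 0)) {C : ℝ}
    (hC : TimeDerivBounded S u C) :
    ∃ w : ℝ × Vn N → ℝ, ∀ᵐ z : (ℝ × Vn N) × ℝ ∂volume.restrict (S ×ˢ cellT),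
      ∫ y, U ((r z.1, (z.2 : UnitAddCircle)), y) = w z.1 :=
  ⟨fun q => ∫ s, ∫ y, U ((r q, s), y),
    (measurePreserving_restrict_prod_cellT r.continuous.measurable).quasiMeasurePreserving.ae
      (hC.ae_integral_eq_integral_integral hS hι hε hε₀ h.memLp h.memLp_limit h.tendsto)⟩

end GradientLimit

end Conclusion

theorem _root_.two_scale_compactness_gradients_general
    (N : ℕ) (S : Set (ℝ × Vn N)) (hS : IsOpen S) (hSb : Bornology.IsBounded S)
    (ε : ℕ → ℝ) (hεpos : ∀ n, 0 < ε n) (hεlim : Tendsto ε atTop (nhds 0))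
    (u : ℕ → ℝ × Vn N → ℝ) (Du : ℕ → ℝ × Vn N → Vn N)
    (humeas : ∀ n, AEStronglyMeasurable (u n) (volume.restrict S))
    (hDumeas : ∀ n j, AEStronglyMeasurable (fun q => Du n q j)
      (volume.restrict S))
    (hweakgrad : ∀ n (j : Fin N), ∀ ζ : ℝ × Vn N → ℝ, ContDiff ℝ (⊤ : ℕ∞) ζ →
      HasCompactSupport ζ → tsupport ζ ⊆ S →
      ∫ q in S, u n q * fderiv ℝ ζ q ((0 : ℝ), Pi.single j 1)
        = - ∫ q in S, Du n q j * ζ q)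
    (huint : ∀ n, IntegrableOn
      (fun q => (u n q) ^ 2 + ∑ j, (Du n q j) ^ 2) S volume)
    (hbdd : ∃ C : ℝ, ∀ n,
      (∫ q in S, ((u n q) ^ 2 + ∑ j, (Du n q j) ^ 2)) ≤ C) :
    ∃ φs : ℕ → ℕ, StrictMono φs ∧
    ∃ (u₀ : ℝ × Vn N → ℝ → ℝ) (Du₀ : ℝ × Vn N → ℝ → Vn N)
      (u₁ : ℝ × Vn N → ℝ → Vn N → ℝ) (Dyu₁ : ℝ × Vn N → ℝ → Vn N → Vn N),
      IntegrableOn (fun z : (ℝ × Vn N) × ℝ =>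
          (u₀ z.1 z.2) ^ 2 + ∑ j, (Du₀ z.1 z.2 j) ^ 2)
        (S ×ˢ cellT) volume ∧
      (∀ (j : Fin N), ∀ ζ : ℝ × Vn N → ℝ, ContDiff ℝ (⊤ : ℕ∞) ζ → HasCompactSupport ζ →
        tsupport ζ ⊆ S →
        ∀ᵐ τ ∂(volume.restrict cellT),
          ∫ q in S, u₀ q τ * fderiv ℝ ζ q ((0 : ℝ), Pi.single j 1)
            = - ∫ q in S, Du₀ q τ j * ζ q) ∧
      (∀ q τ (y : Vn N) (kk : Fin N → ℤ), u₁ q τ (fun i => y i + kk i) = u₁ q τ y) ∧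
      (∀ q τ, ∫ y in cellY N, u₁ q τ y = 0) ∧
      (∀ q τ (j : Fin N), ∀ ζ : Vn N → ℝ, ContDiff ℝ (⊤ : ℕ∞) ζ → HasCompactSupport ζ →
        ∫ y, u₁ q τ y * pdN ζ j y = - ∫ y, Dyu₁ q τ y j * ζ y) ∧
      IntegrableOn (fun z : ((ℝ × Vn N) × ℝ) × Vn N =>
          (u₁ z.1.1 z.1.2 z.2) ^ 2 + ∑ j, (Dyu₁ z.1.1 z.1.2 z.2 j) ^ 2)
        ((S ×ˢ cellT) ×ˢ cellY N) volume ∧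
      WeakTwoScale N S 2 (fun n => ε (φs n)) (fun n => u (φs n))
        (fun q τ _ => u₀ q τ) ∧
      (∀ v : ℝ × Vn N → ℝ, MemLp v 2 (volume.restrict S) →
        Tendsto (fun n => ∫ q in S, u (φs n) q * v q) atTop
          (nhds (∫ q in S, (∫ τ in cellT, u₀ q τ) * v q)) ∧
        ∀ (j : Fin N),
          Tendsto (fun n => ∫ q in S, Du (φs n) q j * v q) atTop
            (nhds (∫ q in S, (∫ τ in cellT, Du₀ q τ j) * v q))) ∧
      (∀ (j : Fin N),
        WeakTwoScale N S 2 (fun n => ε (φs n))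
          (fun n q => Du (φs n) q j)
          (fun q τ y => Du₀ q τ j + Dyu₁ q τ y j)) ∧
      ((∃ C : ℝ, ∀ n, ∀ ζ : ℝ × Vn N → ℝ, ContDiff ℝ (⊤ : ℕ∞) ζ → HasCompactSupport ζ →
          tsupport ζ ⊆ S →
          |∫ q in S, u n q * fderiv ℝ ζ q ((1 : ℝ), (0 : Vn N))|
            ≤ C * Real.sqrt (∫ q in S,
                ((ζ q) ^ 2 + ∑ j, (fderiv ℝ ζ q ((0 : ℝ), Pi.single j 1)) ^ 2))) →
        ∃ w : ℝ × Vn N → ℝ,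
          ∀ᵐ z ∂(volume.restrict (S ×ˢ cellT)),
            u₀ (z : (ℝ × Vn N) × ℝ).1 z.2 = w z.1) := by
  have : IsFiniteMeasure (volume.restrict S) :=
    ⟨by rw [Measure.restrict_apply_univ]; exact hSb.measure_lt_top⟩
  obtain ⟨C, hC⟩ := hbdd
  obtain ⟨a, b, r, hr⟩ := exists_retraction_Icc hSb
  have hι : ∀ q ∈ S, (⟨Subtype.val, continuous_subtype_val⟩ : C(Icc a b, ℝ × Vn N)) (r q) = q := hr
  obtain ⟨φ, hφ, U, V, h⟩ := exists_gradientLimit hS.measurableSet r hεpos hεlim humeas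
    (g := fun j n q => Du n q j) (fun j n => hDumeas n j)
    (fun j n ζ hζ => hweakgrad n j ζ hζ.contDiff hζ.hasCompactSupport hζ.tsupport_subset) huint hC
  have hε : ∀ n, ε (φ n) ≠ 0 := fun n => (hεpos _).ne'
  have hε₀ := hεlim.comp hφ.tendsto_atTop
  obtain ⟨w, D, hw, hD, mean_zero, hwD, hVD⟩ := h.exists_corrector hS hι hε hε₀
  exact ⟨φ, hφ, fun q τ => ∫ y, U ((r q, (τ : UnitAddCircle)), y),
    fun q τ j => ∫ y, V j ((r q, (τ : UnitAddCircle)), y),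
    fun q τ y => w ((r q, (τ : UnitAddCircle)), toTorus y),
    fun q τ y j => D j ((r q, (τ : UnitAddCircle)), toTorus y),
    h.integrableOn_sq_mean_add_sum_sq_mean_grad,
    fun j ζ hζ hζc hζS => measurePreserving_coe_cellT.quasiMeasurePreserving.ae
      (h.ae_setIntegral_mul_fderiv_eq hS.measurableSet hι j ⟨hζ, hζc, hζS⟩),
    fun q τ y k => congrArg (fun y => w ((r q, (τ : UnitAddCircle)), y)) (toTorus_add_intCast y k),
    fun q τ => (integral_comp_of_measurePreserving measurePreserving_toTorus_cellY
      (mean_zero _).1.aestronglyMeasurable).trans (mean_zero _).2,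
    fun q τ j ζ hζ hζc => (hwD _ j).integral_mul_pdN hζ hζc,
    (measurePreserving_restrict_prod_cellT_prod_cellY
      r.continuous.measurable).integrable_comp_of_integrable (integrable_sq_add_sum_sq hw hD),
    h.weakTwoScale hS hι hε hε₀,
    fun v hv => ⟨h.tendsto_setIntegral_mul hS.measurableSet hι hv,
      h.tendsto_setIntegral_grad_mul hS.measurableSet hι hv⟩,
    fun j => h.weakTwoScale_grad hS.measurableSet hι (hVD j),
    fun ⟨M, hM⟩ => h.exists_ae_mean_eq hS hι hε hε₀ (C := M) fun n ζ hζ =>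
      hM (φ n) ζ hζ.contDiff hζ.hasCompactSupport hζ.tsupport_subset⟩

end TwoScale

/-- Theorem 3.3, two-scale compactness for gradients: if `(u_ε)` is
bounded in `L²(0,T;H¹(Q))` (with weak spatial gradients `Du_ε`), then along a subsequence
`u_ε → u₀` in `L²(Q_T)`-weak two-scale, `u_ε ⇀ ũ₀ = ∫_𝒯 u₀ dτ` in `L²(0,T;H¹(Q))`-weak,
and `∂u_ε/∂x_j → ∂u₀/∂x_j + ∂u₁/∂y_j` in `L²(Q_T)`-weak two-scale, with
`u₀ ∈ L²(0,T;L²(𝒯;H¹(Q)))` and `u₁ ∈ L²(Q_T;L²(𝒯;H¹_#(𝒴)))`.  If moreover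
`(∂u_ε/∂t)` is bounded in `L²(0,T;(H¹(Q))*)`, then `u₀` is independent of `τ`. -/
theorem two_scale_compactness_gradients
    (N : ℕ) (Q : Set (Vn N)) (hQo : IsOpen Q) (hQb : Bornology.IsBounded Q)
    (T : ℝ) (hT : 0 < T)
    (ε : ℕ → ℝ) (hεpos : ∀ n, 0 < ε n) (hεlim : Tendsto ε atTop (nhds 0))
    (u : ℕ → ℝ × Vn N → ℝ) (Du : ℕ → ℝ × Vn N → Vn N)
    (humeas : ∀ n, AEStronglyMeasurable (u n) (volume.restrict (Set.Ioo 0 T ×ˢ Q)))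
    (hDumeas : ∀ n j, AEStronglyMeasurable (fun q => Du n q j)
      (volume.restrict (Set.Ioo 0 T ×ˢ Q)))
    -- `Du n` is the weak spatial gradient of `u n` on `Q_T`
    (hweakgrad : ∀ n (j : Fin N), ∀ ζ : ℝ × Vn N → ℝ, ContDiff ℝ (⊤ : ℕ∞) ζ →
      HasCompactSupport ζ → tsupport ζ ⊆ Set.Ioo 0 T ×ˢ Q →
      ∫ q in Set.Ioo 0 T ×ˢ Q, u n q * fderiv ℝ ζ q ((0 : ℝ), Pi.single j 1)
        = - ∫ q in Set.Ioo 0 T ×ˢ Q, Du n q j * ζ q)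
    (huint : ∀ n, IntegrableOn
      (fun q => (u n q) ^ 2 + ∑ j, (Du n q j) ^ 2) (Set.Ioo 0 T ×ˢ Q) volume)
    -- boundedness in L²(0,T;H¹(Q))
    (hbdd : ∃ C : ℝ, ∀ n,
      (∫ q in Set.Ioo 0 T ×ˢ Q, ((u n q) ^ 2 + ∑ j, (Du n q j) ^ 2)) ≤ C) :
    ∃ φs : ℕ → ℕ, StrictMono φs ∧
    ∃ (u₀ : ℝ × Vn N → ℝ → ℝ) (Du₀ : ℝ × Vn N → ℝ → Vn N)
      (u₁ : ℝ × Vn N → ℝ → Vn N → ℝ) (Dyu₁ : ℝ × Vn N → ℝ → Vn N → Vn N),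
      -- u₀ ∈ L²(0,T; L²(𝒯; H¹(Q))), with weak x-gradient Du₀
      IntegrableOn (fun z : (ℝ × Vn N) × ℝ =>
          (u₀ z.1 z.2) ^ 2 + ∑ j, (Du₀ z.1 z.2 j) ^ 2)
        ((Set.Ioo 0 T ×ˢ Q) ×ˢ cellT) volume ∧
      (∀ (j : Fin N), ∀ ζ : ℝ × Vn N → ℝ, ContDiff ℝ (⊤ : ℕ∞) ζ → HasCompactSupport ζ →
        tsupport ζ ⊆ Set.Ioo 0 T ×ˢ Q →
        ∀ᵐ τ ∂(volume.restrict cellT),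
          ∫ q in Set.Ioo 0 T ×ˢ Q, u₀ q τ * fderiv ℝ ζ q ((0 : ℝ), Pi.single j 1)
            = - ∫ q in Set.Ioo 0 T ×ˢ Q, Du₀ q τ j * ζ q) ∧
      -- u₁ ∈ L²(Q_T; L²(𝒯; H¹_#(𝒴))): 𝒴-periodic, mean zero, weak y-gradient Dyu₁
      (∀ q τ (y : Vn N) (kk : Fin N → ℤ), u₁ q τ (fun i => y i + kk i) = u₁ q τ y) ∧
      (∀ q τ, ∫ y in cellY N, u₁ q τ y = 0) ∧
      (∀ q τ (j : Fin N), ∀ ζ : Vn N → ℝ, ContDiff ℝ (⊤ : ℕ∞) ζ → HasCompactSupport ζ →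
        ∫ y, u₁ q τ y * pdN ζ j y = - ∫ y, Dyu₁ q τ y j * ζ y) ∧
      IntegrableOn (fun z : ((ℝ × Vn N) × ℝ) × Vn N =>
          (u₁ z.1.1 z.1.2 z.2) ^ 2 + ∑ j, (Dyu₁ z.1.1 z.1.2 z.2 j) ^ 2)
        (((Set.Ioo 0 T ×ˢ Q) ×ˢ cellT) ×ˢ cellY N) volume ∧
      -- u_ε → u₀ in L²(Q_T)-weak two-scale
      WeakTwoScale N (Set.Ioo 0 T ×ˢ Q) 2 (fun n => ε (φs n)) (fun n => u (φs n))
        (fun q τ _ => u₀ q τ) ∧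
      -- u_ε ⇀ ũ₀ = ∫_𝒯 u₀ dτ in L²(0,T;H¹(Q))-weak
      (∀ v : ℝ × Vn N → ℝ, MemLp v 2 (volume.restrict (Set.Ioo 0 T ×ˢ Q)) →
        Tendsto (fun n => ∫ q in Set.Ioo 0 T ×ˢ Q, u (φs n) q * v q) atTop
          (nhds (∫ q in Set.Ioo 0 T ×ˢ Q, (∫ τ in cellT, u₀ q τ) * v q)) ∧
        ∀ (j : Fin N),
          Tendsto (fun n => ∫ q in Set.Ioo 0 T ×ˢ Q, Du (φs n) q j * v q) atTop
            (nhds (∫ q in Set.Ioo 0 T ×ˢ Q, (∫ τ in cellT, Du₀ q τ j) * v q))) ∧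
      -- ∂u_ε/∂x_j → ∂u₀/∂x_j + ∂u₁/∂y_j in L²(Q_T)-weak two-scale
      (∀ (j : Fin N),
        WeakTwoScale N (Set.Ioo 0 T ×ˢ Q) 2 (fun n => ε (φs n))
          (fun n q => Du (φs n) q j)
          (fun q τ y => Du₀ q τ j + Dyu₁ q τ y j)) ∧
      -- if moreover (∂u_ε/∂t) is bounded in L²(0,T;(H¹(Q))*), u₀ is independent of τ
      ((∃ C : ℝ, ∀ n, ∀ ζ : ℝ × Vn N → ℝ, ContDiff ℝ (⊤ : ℕ∞) ζ → HasCompactSupport ζ →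
          tsupport ζ ⊆ Set.Ioo 0 T ×ˢ Q →
          |∫ q in Set.Ioo 0 T ×ˢ Q, u n q * fderiv ℝ ζ q ((1 : ℝ), (0 : Vn N))|
            ≤ C * Real.sqrt (∫ q in Set.Ioo 0 T ×ˢ Q,
                ((ζ q) ^ 2 + ∑ j, (fderiv ℝ ζ q ((0 : ℝ), Pi.single j 1)) ^ 2))) →
        ∃ w : ℝ × Vn N → ℝ,
          ∀ᵐ z ∂(volume.restrict ((Set.Ioo 0 T ×ˢ Q) ×ˢ cellT)),
            u₀ (z : (ℝ × Vn N) × ℝ).1 z.2 = w z.1) := by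
  exact two_scale_compactness_gradients_general N _ (isOpen_Ioo.prod hQo)
    ((Metric.isBounded_Ioo 0 T).prod hQb) ε hεpos hεlim u Du humeas hDumeas hweakgrad huint hbdd
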